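/- Let p ≥ 2, β > 0, and let q satisfy 1/p + 1/q = 1. Let μ_p be the probability measure on ℍ = ℝ³ with density e^{−β d^p(x)} / ∫_{ℝ³} e^{−β d^p(y)} dy with respect to Lebesgue measure, where d is the Carnot–Carathéodory distance to the identity. Then μ_p satisfies an (LS_q) inequality: there exists c > 0 such that μ_p(|f|^q log(|f|^q / μ_p(|f|^q))) ≤ c μ_p(|∇f|^q) for all smooth f:ℍ→ℝ. -/

import Mathlib

open MeasureTheory Real Filter

noncomputable section

/-- The underlying space of the Heisenberg group: `ℝ³`. -/
abbrev Heis : Type := ℝ × ℝ × ℝ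

/-- The Heisenberg group multiplication. -/
def Hmul (x y : Heis) : Heis :=
  (x.1 + y.1, x.2.1 + y.2.1,
    x.2.2 + y.2.2 + (x.1 * y.2.1 - x.2.1 * y.1) / 2)

/-- The identity element of the Heisenberg group. -/
def He : Heis := ((0 : ℝ), (0 : ℝ), (0 : ℝ))

/-- The left-invariant vector field `X₁ = ∂₁ - (x₂/2) ∂₃` acting on functions. -/
def X1 (f : Heis → ℝ) (x : Heis) : ℝ :=
  fderiv ℝ f x (1, 0, 0) - x.2.1 / 2 * fderiv ℝ f x (0, 0, 1)

/-- The left-invariant vector field `X₂ = ∂₂ + (x₁/2) ∂₃` acting on functions. -/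
def X2 (f : Heis → ℝ) (x : Heis) : ℝ :=
  fderiv ℝ f x (0, 1, 0) + x.1 / 2 * fderiv ℝ f x (0, 0, 1)

/-- The vector field `X₃ = ∂₃` acting on functions. -/
def X3 (f : Heis → ℝ) (x : Heis) : ℝ := fderiv ℝ f x (0, 0, 1)

/-- The length `|∇f|` of the sub-gradient `∇f = (X₁ f, X₂ f)`. -/
def gradLen (f : Heis → ℝ) (x : Heis) : ℝ :=
  Real.sqrt ((X1 f x) ^ 2 + (X2 f x) ^ 2)

/-- The sub-Laplacian `Δ = X₁² + X₂²`. -/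
def subLap (f : Heis → ℝ) (x : Heis) : ℝ := X1 (X1 f) x + X2 (X2 f) x

/-- An admissible (horizontal Lipschitz) path from `x` to `y` in the Heisenberg group:
`γ'(s) = a₁(s) X₁(γ(s)) + a₂(s) X₂(γ(s))` almost everywhere on `[0,1]`. -/
structure AdmissiblePath (x y : Heis) where
  γ : ℝ → Heis
  a1 : ℝ → ℝ
  a2 : ℝ → ℝ
  lipschitz : ∃ K : NNReal, LipschitzOnWith K γ (Set.Icc 0 1)
  meas1 : Measurable a1
  meas2 : Measurable a2
  start : γ 0 = x
  endpoint : γ 1 = y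
  admissible : ∀ᵐ s ∂(volume.restrict (Set.Icc (0:ℝ) 1)),
    HasDerivAt γ (a1 s • (((1 : ℝ), (0 : ℝ), -(γ s).2.1 / 2) : Heis)
      + a2 s • (((0 : ℝ), (1 : ℝ), (γ s).1 / 2) : Heis)) s

/-- The length of an admissible path. -/
def pathLength {x y : Heis} (p : AdmissiblePath x y) : ℝ :=
  ∫ s in Set.Icc (0:ℝ) 1, Real.sqrt (p.a1 s ^ 2 + p.a2 s ^ 2)

/-- The Carnot–Carathéodory distance on the Heisenberg group. -/
def ccDist (x y : Heis) : ℝ :=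
  sInf {l : ℝ | ∃ p : AdmissiblePath x y, l = pathLength p}

/-- The Carnot–Carathéodory distance to the identity `e`. -/
def ccNorm (x : Heis) : ℝ := ccDist x He

/-- The dilations `δ_λ(x) = (λx₁, λx₂, λ²x₃)`. -/
def dil (lam : ℝ) (x : Heis) : Heis := (lam * x.1, lam * x.2.1, lam ^ 2 * x.2.2)

end

noncomputable section

/-- The probability measure `μ_p(dx) = e^{-β d^p(x)} dx / ∫ e^{-β d^p}` on `ℍ`. -/
def muP (p β : ℝ) : Measure Heis :=
  (volume : Measure Heis).withDensity
    (fun x => ENNReal.ofReal (Real.exp (-β * ccNorm x ^ p) /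
      ∫ y : Heis, Real.exp (-β * ccNorm y ^ p)))

/-!
Right translation by a horizontal element `h` changes `d` by at most the length of `h`. Hence it
changes the density of `μ_p` by a controlled factor, and the difference `f (x · h) - f x` is
controlled in `L^q(μ_p)` by `|h| ‖∇f‖_q`.

* At a point with `d = t`, a step of length of order `t ^ (1 - p)` towards the identity multiplies
  the density by a large constant. Doing this on each dyadic shell gives the `U`-bound
  `∫_{d ≥ T} |f|^q ≤ K T^{-p} (∫ |∇f|^q + ∫ |f|^q)`. Together with a local Poincaré inequality on
  a box, it yields the global `q`-Poincaré inequality.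
* At scale `T ^ (1 - p)` the density is nearly constant on `{d < T}`. Averaging over right
  translations of that size and absorbing `{d ≥ T}` by the `U`-bound gives a Faber–Krahn inequality:
  a function supported on a set of measure `e^{-L}` satisfies `L ∫ |f|^q ≤ C (∫ |∇f|^q + ∫ |f|^q)`.
* Slicing `f - a` at dyadic heights and summing the Faber–Krahn inequality over the slices bounds
  `∫ |f - a|^q log |f - a|`. The entropy of `|f|^q` is at most `∫ t klFun (|f|^q / t)` for every
  `t > 0`. For `t = (|a| + ‖f - a‖_q)^q` and `|f|^q ≲ t`, the bounds `klFun s ≤ (s - 1)²` and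
  `q ≤ 2` give `t klFun (|f|^q / t) ≲ |f - a|^q + ‖f - a‖_q^q`; otherwise `|f| ≲ |f - a|` and the
  sliced bound applies.
-/

open scoped ENNReal NNReal Topology

/-! ### The group law, boxes and Lebesgue measure -/

lemma Hmul_assoc (x y z : Heis) : Hmul (Hmul x y) z = Hmul x (Hmul y z) := by
  ext <;> simp only [Hmul] <;> ring

lemma neg_Hmul_cancel_left (x y : Heis) : Hmul (-x) (Hmul x y) = y := by
  ext <;> simp only [Hmul, Prod.fst_neg, Prod.snd_neg] <;> ring

lemma Hmul_neg_cancel_left (x y : Heis) : Hmul x (Hmul (-x) y) = y := by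
  ext <;> simp only [Hmul, Prod.fst_neg, Prod.snd_neg] <;> ring

lemma Hmul_neg_cancel_right (x y : Heis) : Hmul (Hmul x y) (-y) = x := by
  ext <;> simp only [Hmul, Prod.fst_neg, Prod.snd_neg] <;> ring

lemma Hmul_He (x : Heis) : Hmul x He = x := by
  simp [Hmul, He]

lemma He_Hmul (x : Heis) : Hmul He x = x := by
  simp [Hmul, He]

@[fun_prop]
lemma continuous_Hmul {α : Type*} [TopologicalSpace α] {f g : α → Heis} (hf : Continuous f)
    (hg : Continuous g) : Continuous fun a => Hmul (f a) (g a) := by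
  unfold Hmul; fun_prop

lemma measurePreserving_shear (a b : ℝ) {φ : ℝ × ℝ → ℝ} (hφ : Measurable φ) :
    MeasurePreserving (fun x : Heis => (x.1 + a, x.2.1 + b, x.2.2 + φ (x.1, x.2.1))) := by
  have inner (s : ℝ) : MeasurePreserving fun y : ℝ × ℝ => (y.1 + b, y.2 + φ (s, y.1)) :=
    (measurePreserving_add_right volume b).skew_product (g := fun t u => u + φ (s, t))
      (by fun_prop) (.of_forall fun _ => (measurePreserving_add_right volume _).map_eq)
  exact (measurePreserving_add_right volume a).skew_product
    (g := fun s (y : ℝ × ℝ) => (y.1 + b, y.2 + φ (s, y.1)))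
    (by fun_prop) (.of_forall fun s => (inner s).map_eq)

lemma measurePreserving_Hmul_right (k : Heis) : MeasurePreserving fun x => Hmul x k := by
  convert measurePreserving_shear k.1 k.2.1
    (φ := fun u => k.2.2 + (u.1 * k.2.1 - u.2 * k.1) / 2) (by fun_prop) using 2
  ext <;> simp only [Hmul, add_assoc]

lemma measurePreserving_Hmul_left (k : Heis) : MeasurePreserving fun x => Hmul k x := by
  convert measurePreserving_shear k.1 k.2.1
    (φ := fun u => k.2.2 + (k.1 * u.2 - k.2.1 * u.1) / 2) (by fun_prop) using 2
  ext <;> simp only [Hmul] <;> ring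

/-- The box of size `r` around the identity, homogeneous under the dilations `dil`. Up to a
factor `10` it is a Carnot–Carathéodory ball of radius `r`, but its volume is explicit. -/
def hbox (r : ℝ) : Set Heis := {h | |h.1| ≤ r ∧ |h.2.1| ≤ r ∧ |h.2.2| ≤ r ^ 2}

lemma hbox_eq_prod (r : ℝ) :
    hbox r = Set.Icc (-r) r ×ˢ (Set.Icc (-r) r ×ˢ Set.Icc (-r ^ 2) (r ^ 2)) := by
  ext x
  simp only [hbox, abs_le, Set.mem_prod, Set.mem_ofPred_eq, Set.mem_Icc]

lemma isCompact_hbox (r : ℝ) : IsCompact (hbox r) := by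
  rw [hbox_eq_prod]
  exact isCompact_Icc.prod (isCompact_Icc.prod isCompact_Icc)

lemma measurableSet_hbox (r : ℝ) : MeasurableSet (hbox r) := (isCompact_hbox r).measurableSet

lemma volume_hbox {r : ℝ} (hr : 0 ≤ r) : volume (hbox r) = ENNReal.ofReal (8 * r ^ 4) := by
  rw [hbox_eq_prod, Measure.volume_eq_prod, Measure.prod_prod, Measure.volume_eq_prod,
    Measure.prod_prod, Real.volume_Icc, Real.volume_Icc, ← ENNReal.ofReal_mul (by nlinarith),
    ← ENNReal.ofReal_mul (by linarith)]
  congr 1; ring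

lemma volume_hbox_ne_zero {r : ℝ} (hr : 0 < r) : volume (hbox r) ≠ 0 := by
  rw [volume_hbox hr.le, Ne, ENNReal.ofReal_eq_zero, not_le]
  positivity

lemma volume_hbox_ne_top (r : ℝ) : volume (hbox r) ≠ ∞ := (isCompact_hbox r).measure_ne_top

lemma He_mem_hbox {r : ℝ} (hr : 0 ≤ r) : He ∈ hbox r := by
  simp [hbox, He, hr]

lemma neg_mem_hbox {r : ℝ} {h : Heis} (hh : h ∈ hbox r) : -h ∈ hbox r := by
  simpa [hbox] using hh

lemma hbox_mono {r s : ℝ} (hr : 0 ≤ r) (hrs : r ≤ s) : hbox r ⊆ hbox s := by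
  rintro x ⟨h1, h2, h3⟩
  exact ⟨h1.trans hrs, h2.trans hrs, h3.trans (by gcongr)⟩

lemma Hmul_mem_hbox {r s : ℝ} {h k : Heis} (hh : h ∈ hbox r) (hk : k ∈ hbox s) :
    Hmul h k ∈ hbox (r + s) := by
  obtain ⟨h1, h2, h3⟩ := hh
  obtain ⟨k1, k2, k3⟩ := hk
  have hr : 0 ≤ r := (abs_nonneg _).trans h1
  have h12 : |h.1 * k.2.1| ≤ r * s := by rw [abs_mul]; gcongr
  have h21 : |h.2.1 * k.1| ≤ r * s := by rw [abs_mul]; gcongr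
  refine ⟨(abs_add_le _ _).trans (add_le_add h1 k1), (abs_add_le _ _).trans (add_le_add h2 k2), ?_⟩
  simp only [Hmul]
  rw [abs_le] at *
  constructor <;> nlinarith

/-- The horizontal group element `(a, b, 0)`, the exponential of `a X₁ + b X₂`. -/
def hor (a b : ℝ) : Heis := (a, b, 0)

lemma hor_mem_hbox {a b r : ℝ} (ha : |a| ≤ r) (hb : |b| ≤ r) : hor a b ∈ hbox r :=
  ⟨ha, hb, by simpa [hor] using sq_nonneg r⟩

/-- `IsHorProd r n k` says that `k` is a product of `n` horizontal elements with coordinates at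
most `r`. Such products are the endpoints of horizontal broken lines starting at the identity. -/
inductive IsHorProd (r : ℝ) : ℕ → Heis → Prop
  | one : IsHorProd r 0 He
  | mul_hor {n : ℕ} {k : Heis} {a b : ℝ} :
      IsHorProd r n k → |a| ≤ r → |b| ≤ r → IsHorProd r (n + 1) (Hmul k (hor a b))

lemma IsHorProd.mem_hbox {r : ℝ} {n : ℕ} {k : Heis} (hk : IsHorProd r n k) :
    k ∈ hbox (n * r) := by
  induction hk with
  | one => exact He_mem_hbox (by simp)
  | mul_hor _ ha hb ih =>
    rw [Nat.cast_succ, add_one_mul]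
    exact Hmul_mem_hbox ih (hor_mem_hbox ha hb)

lemma isHorProd_five_of_mem_hbox {r : ℝ} {h : Heis} (hr : 0 < r) (hh : h ∈ hbox r) :
    IsHorProd r 5 h := by
  obtain ⟨h1, h2, h3⟩ := hh
  set t := h.2.2 / r with ht
  have htr : |t| ≤ r := by rw [ht, abs_div, abs_of_pos hr, div_le_iff₀ hr]; nlinarith
  have hneg : |-t| ≤ r := by rwa [abs_neg]
  have hr0 : |(0 : ℝ)| ≤ r := by simpa using hr.le
  have hrr : |r| ≤ r := (abs_of_pos hr).le
  -- The commutator of `(r, 0, 0)` and `(0, t, 0)` is the central element `(0, 0, r * t)`.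
  convert ((((IsHorProd.one.mul_hor h1 h2).mul_hor hrr hr0).mul_hor hr0 htr).mul_hor
    ((abs_neg r).trans_le hrr) hr0).mul_hor hr0 hneg using 1
  ext <;> simp only [Hmul, hor, He, ht] <;> field_simp <;> ring

/-! ### Admissible paths -/

/-- The value at `x` of the left-invariant vector field `a X₁ + b X₂`. -/
def horVec (a b : ℝ) (x : Heis) : Heis :=
  a • ((1, 0, -x.2.1 / 2) : Heis) + b • ((0, 1, x.1 / 2) : Heis)

lemma horVec_eq (a b : ℝ) (x : Heis) : horVec a b x = (a, b, (x.1 * b - x.2.1 * a) / 2) := by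
  ext <;> simp [horVec, mul_comm]
  ring

lemma smul_horVec (c a b : ℝ) (x : Heis) : c • horVec a b x = horVec (c * a) (c * b) x := by
  simp only [horVec, smul_add, smul_smul]

lemma Hmul_hor_mul (x : Heis) (a b s : ℝ) :
    Hmul x (hor (s * a) (s * b)) = x + s • horVec a b x := by
  rw [horVec_eq]
  ext <;> simp only [Hmul, hor, Prod.fst_add, Prod.snd_add, Prod.smul_fst, Prod.smul_snd,
    smul_eq_mul]
  ring

lemma hasDerivAt_Hmul_hor_mul (x : Heis) (a b s : ℝ) :
    HasDerivAt (fun s => Hmul x (hor (s * a) (s * b)))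
      (horVec a b (Hmul x (hor (s * a) (s * b)))) s := by
  have hline : HasDerivAt (fun s : ℝ => x + s • horVec a b x) (horVec a b x) s := by
    simpa using ((hasDerivAt_id s).smul_const (horVec a b x)).const_add x
  have hinv : horVec a b (Hmul x (hor (s * a) (s * b))) = horVec a b x := by
    simp only [horVec_eq, Hmul, hor, Prod.mk.injEq, true_and]
    ring
  rw [hinv]
  simpa only [Hmul_hor_mul] using hline

lemma ae_comp_affine {c : ℝ} (hc : c ≠ 0) (d : ℝ) {Q : ℝ → Prop} (hQ : ∀ᵐ s : ℝ, Q s) :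
    ∀ᵐ s : ℝ, Q (c * s + d) := by
  have hmul : Measure.QuasiMeasurePreserving (fun s : ℝ => c * s) volume volume := by
    refine ⟨by fun_prop, ?_⟩
    rw [Real.map_volume_mul_left hc]
    exact Measure.smul_absolutelyContinuous
  exact ((measurePreserving_add_right volume d).quasiMeasurePreserving.comp hmul).ae hQ

lemma sqrt_sq_mul_add_sq_mul {c : ℝ} (hc : 0 ≤ c) (a b : ℝ) :
    √((c * a) ^ 2 + (c * b) ^ 2) = c * √(a ^ 2 + b ^ 2) := by
  rw [mul_pow, mul_pow, ← mul_add, Real.sqrt_mul (sq_nonneg _), Real.sqrt_sq hc]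

namespace AdmissiblePath

variable {x y z : Heis}

/-- The length of the horizontal velocity of an admissible path. -/
def speed (P : AdmissiblePath x y) (s : ℝ) : ℝ := √(P.a1 s ^ 2 + P.a2 s ^ 2)

lemma speed_nonneg (P : AdmissiblePath x y) (s : ℝ) : 0 ≤ P.speed s := Real.sqrt_nonneg _

lemma abs_a1_le_speed (P : AdmissiblePath x y) (s : ℝ) : |P.a1 s| ≤ P.speed s :=
  Real.abs_le_sqrt (by nlinarith [sq_nonneg (P.a2 s)])

lemma abs_a2_le_speed (P : AdmissiblePath x y) (s : ℝ) : |P.a2 s| ≤ P.speed s :=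
  Real.abs_le_sqrt (by nlinarith [sq_nonneg (P.a1 s)])

lemma measurable_speed (P : AdmissiblePath x y) : Measurable P.speed := by
  have h1 := P.meas1
  have h2 := P.meas2
  unfold speed; fun_prop

lemma ae_hasDerivAt (P : AdmissiblePath x y) :
    ∀ᵐ s : ℝ, s ∈ Set.Icc (0 : ℝ) 1 → HasDerivAt P.γ (horVec (P.a1 s) (P.a2 s) (P.γ s)) s :=
  (ae_restrict_iff' measurableSet_Icc).1 P.admissible

lemma exists_ae_speed_le (P : AdmissiblePath x y) :
    ∃ K : ℝ, ∀ᵐ s ∂volume.restrict (Set.Icc (0 : ℝ) 1), P.speed s ≤ K := by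
  obtain ⟨K, hK⟩ := P.lipschitz
  refine ⟨2 * K, ?_⟩
  rw [ae_restrict_congr_set Ioo_ae_eq_Icc.symm, ae_restrict_iff' measurableSet_Ioo]
  filter_upwards [P.ae_hasDerivAt] with s hs hs01
  have hnorm := (hs (Set.Ioo_subset_Icc_self hs01)).le_of_lipschitzOn
    (Icc_mem_nhds hs01.1 hs01.2) hK
  rw [horVec_eq] at hnorm
  have h1 : |P.a1 s| ≤ K := (norm_fst_le _).trans hnorm
  have h2 : |P.a2 s| ≤ K := (norm_fst_le _).trans ((norm_snd_le _).trans hnorm)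
  refine Real.sqrt_le_iff.2 ⟨by positivity, ?_⟩
  nlinarith [sq_le_sq' (neg_le_of_abs_le h1) (le_of_abs_le h1),
    sq_le_sq' (neg_le_of_abs_le h2) (le_of_abs_le h2), sq_nonneg (K : ℝ)]

lemma integrableOn_speed (P : AdmissiblePath x y) : IntegrableOn P.speed (Set.Icc 0 1) := by
  obtain ⟨K, hK⟩ := P.exists_ae_speed_le
  refine Measure.integrableOn_of_bounded (M := K) (by simp)
    P.measurable_speed.aestronglyMeasurable ?_
  filter_upwards [hK] with s hs
  rwa [Real.norm_of_nonneg (P.speed_nonneg s)]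

lemma intervalIntegrable_speed (P : AdmissiblePath x y) {a b : ℝ} (ha : 0 ≤ a) (hab : a ≤ b)
    (hb : b ≤ 1) : IntervalIntegrable P.speed volume a b := by
  rw [intervalIntegrable_iff_integrableOn_Icc_of_le hab]
  exact P.integrableOn_speed.mono_set (Set.Icc_subset_Icc ha hb)

lemma pathLength_eq_intervalIntegral (P : AdmissiblePath x y) :
    pathLength P = ∫ s in (0 : ℝ)..1, P.speed s := by
  rw [intervalIntegral.integral_of_le zero_le_one, ← integral_Icc_eq_integral_Ioc]
  rfl

lemma pathLength_nonneg (P : AdmissiblePath x y) : 0 ≤ pathLength P :=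
  integral_nonneg P.speed_nonneg

lemma abs_apply_sub_apply_le_integral (P : AdmissiblePath x y) (L : Heis →L[ℝ] ℝ) {v : ℝ → ℝ}
    {t : ℝ} (ht : t ∈ Set.Icc (0 : ℝ) 1) (hv : IntervalIntegrable v volume 0 t)
    (hLv : ∀ s ∈ Set.Icc 0 t, |L (horVec (P.a1 s) (P.a2 s) (P.γ s))| ≤ v s) :
    |L (P.γ t) - L x| ≤ ∫ s in (0 : ℝ)..t, v s := by
  obtain ⟨K, hK⟩ := P.lipschitz
  have hsub : Set.uIcc 0 t ⊆ Set.Icc (0 : ℝ) 1 := by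
    rw [Set.uIcc_of_le ht.1]; exact Set.Icc_subset_Icc_right ht.2
  have hac := ((L.lipschitz.comp_lipschitzOnWith hK).mono hsub).absolutelyContinuousOnInterval
  have hint := hac.integral_deriv_eq_sub
  simp only [Function.comp_apply, P.start] at hint
  rw [← hint, ← Real.norm_eq_abs]
  refine intervalIntegral.norm_integral_le_of_norm_le ht.1 ?_ hv
  filter_upwards [P.ae_hasDerivAt] with s hs hst
  rw [(L.hasFDerivAt.comp_hasDerivAt s (hs ⟨hst.1.le, hst.2.trans ht.2⟩)).deriv]
  exact hLv s ⟨hst.1.le, hst.2⟩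

lemma integral_speed_mono (P : AdmissiblePath x y) {s t : ℝ} (hs : 0 ≤ s) (hst : s ≤ t)
    (ht : t ≤ 1) : ∫ u in (0 : ℝ)..s, P.speed u ≤ ∫ u in (0 : ℝ)..t, P.speed u := by
  refine intervalIntegral.integral_mono_interval le_rfl hs hst ?_
    (P.intervalIntegrable_speed le_rfl (hs.trans hst) ht)
  exact .of_forall P.speed_nonneg

lemma abs_fst_sub_le (P : AdmissiblePath x y) {s t : ℝ} (hs : 0 ≤ s) (hst : s ≤ t) (ht : t ≤ 1) :
    |(P.γ s).1 - x.1| ≤ ∫ u in (0 : ℝ)..t, P.speed u :=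
  (P.abs_apply_sub_apply_le_integral (.fst ℝ ℝ (ℝ × ℝ)) ⟨hs, hst.trans ht⟩
    (P.intervalIntegrable_speed le_rfl hs (hst.trans ht)) fun u _ => by
      simpa [horVec_eq] using P.abs_a1_le_speed u).trans (P.integral_speed_mono hs hst ht)

lemma abs_snd_fst_sub_le (P : AdmissiblePath x y) {s t : ℝ} (hs : 0 ≤ s) (hst : s ≤ t)
    (ht : t ≤ 1) : |(P.γ s).2.1 - x.2.1| ≤ ∫ u in (0 : ℝ)..t, P.speed u :=
  (P.abs_apply_sub_apply_le_integral ((ContinuousLinearMap.fst ℝ ℝ ℝ).comp (.snd ℝ ℝ (ℝ × ℝ)))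
    ⟨hs, hst.trans ht⟩ (P.intervalIntegrable_speed le_rfl hs (hst.trans ht)) fun u _ => by
      simpa [horVec_eq] using P.abs_a2_le_speed u).trans (P.integral_speed_mono hs hst ht)

open ContinuousLinearMap in
lemma neg_Hmul_mem_hbox (P : AdmissiblePath x y) {t : ℝ} (ht : t ∈ Set.Icc (0 : ℝ) 1) :
    Hmul (-x) (P.γ t) ∈ hbox (∫ s in (0 : ℝ)..t, P.speed s) := by
  set ℓ := ∫ s in (0 : ℝ)..t, P.speed s with hℓ
  have h1 {s : ℝ} (hs : s ∈ Set.Icc 0 t) : |(P.γ s).1 - x.1| ≤ ℓ := P.abs_fst_sub_le hs.1 hs.2 ht.2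
  have h2 {s : ℝ} (hs : s ∈ Set.Icc 0 t) : |(P.γ s).2.1 - x.2.1| ≤ ℓ :=
    P.abs_snd_fst_sub_le hs.1 hs.2 ht.2
  -- Up to a constant, `L ∘ P.γ` is the vertical coordinate of the curve translated to the
  -- identity, whose derivative is `((γ₁ - x₁) a₂ - (γ₂ - x₂) a₁) / 2`.
  let L : Heis →L[ℝ] ℝ := (snd ℝ ℝ ℝ).comp (snd ℝ ℝ (ℝ × ℝ)) + (x.2.1 / 2) • fst ℝ ℝ (ℝ × ℝ)
    - (x.1 / 2) • (fst ℝ ℝ ℝ).comp (snd ℝ ℝ (ℝ × ℝ))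
  have h3 : |L (P.γ t) - L x| ≤ ∫ s in (0 : ℝ)..t, ℓ * P.speed s := by
    refine P.abs_apply_sub_apply_le_integral L ht
      ((P.intervalIntegrable_speed le_rfl ht.1 ht.2).const_mul ℓ) fun s hs => ?_
    have hℓ0 : 0 ≤ ℓ := (abs_nonneg _).trans (h1 hs)
    have h12 : |((P.γ s).1 - x.1) * P.a2 s| ≤ ℓ * P.speed s := by
      rw [abs_mul]; gcongr; exacts [h1 hs, P.abs_a2_le_speed s]
    have h21 : |((P.γ s).2.1 - x.2.1) * P.a1 s| ≤ ℓ * P.speed s := by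
      rw [abs_mul]; gcongr; exacts [h2 hs, P.abs_a1_le_speed s]
    have hL : L (horVec (P.a1 s) (P.a2 s) (P.γ s)) =
        (((P.γ s).1 - x.1) * P.a2 s - ((P.γ s).2.1 - x.2.1) * P.a1 s) / 2 := by
      simp only [horVec_eq, sub_apply, add_apply, comp_apply, coe_snd', smul_apply, coe_fst',
        smul_eq_mul, L]
      ring
    rw [hL]
    rw [abs_le] at *
    constructor <;> linarith
  have ht' : t ∈ Set.Icc 0 t := ⟨ht.1, le_rfl⟩
  refine ⟨by simpa [Hmul, neg_add_eq_sub] using h1 ht', by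
    simpa [Hmul, neg_add_eq_sub] using h2 ht', ?_⟩
  rw [intervalIntegral.integral_const_mul, ← hℓ, ← sq] at h3
  convert h3 using 2
  simp only [Hmul, Prod.fst_neg, Prod.snd_neg, neg_mul, sub_neg_eq_add, sub_apply, add_apply,
    comp_apply, coe_snd', smul_apply, coe_fst', smul_eq_mul, L]
  ring

lemma ae_hasDerivAt_comp_affine (P : AdmissiblePath x y) {c : ℝ} (hc : c ≠ 0) (d : ℝ) :
    ∀ᵐ s : ℝ, c * s + d ∈ Set.Icc (0 : ℝ) 1 →
      HasDerivAt (fun s => P.γ (c * s + d))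
        (horVec (c * P.a1 (c * s + d)) (c * P.a2 (c * s + d)) (P.γ (c * s + d))) s := by
  filter_upwards [ae_comp_affine hc d P.ae_hasDerivAt] with s hs hmem
  have haff : HasDerivAt (fun s : ℝ => c * s + d) c s := by
    simpa using ((hasDerivAt_id s).const_mul c).add_const d
  exact (HasDerivAt.scomp s (hs hmem) haff).congr_deriv (smul_horVec ..)

/-- The part of the path `P` after time `t`, reparametrized to `[0, 1]`. -/
def tail (P : AdmissiblePath x y) {t : ℝ} (h0 : 0 ≤ t) (h1 : t < 1) :
    AdmissiblePath (P.γ t) y where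
  γ s := P.γ ((1 - t) * s + t)
  a1 s := (1 - t) * P.a1 ((1 - t) * s + t)
  a2 s := (1 - t) * P.a2 ((1 - t) * s + t)
  lipschitz := by
    obtain ⟨K, hK⟩ := P.lipschitz
    have haff : LipschitzWith ‖1 - t‖₊ fun s : ℝ => (1 - t) * s + t :=
      LipschitzWith.of_dist_le_mul fun u v => by
        simp [Real.dist_eq, ← abs_mul, mul_sub]
    refine ⟨K * ‖1 - t‖₊, hK.comp haff.lipschitzOnWith fun s hs => ⟨?_, ?_⟩⟩ <;>
      nlinarith [hs.1, hs.2]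
  meas1 := by have := P.meas1; fun_prop
  meas2 := by have := P.meas2; fun_prop
  start := by simp
  endpoint := by simp [P.endpoint]
  admissible := by
    rw [ae_restrict_iff' measurableSet_Icc]
    filter_upwards [P.ae_hasDerivAt_comp_affine (sub_pos.2 h1).ne' t] with s hs hs01
    exact hs ⟨by nlinarith [hs01.1], by nlinarith [hs01.2]⟩

lemma pathLength_tail (P : AdmissiblePath x y) {t : ℝ} (h0 : 0 ≤ t) (h1 : t < 1) :
    pathLength (P.tail h0 h1) = ∫ s in t..1, P.speed s := by
  have hc : 0 < 1 - t := sub_pos.2 h1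
  have hspeed (s : ℝ) : (P.tail h0 h1).speed s = (1 - t) * P.speed ((1 - t) * s + t) :=
    sqrt_sq_mul_add_sq_mul hc.le _ _
  simp_rw [pathLength_eq_intervalIntegral, hspeed]
  rw [intervalIntegral.integral_const_mul, ← smul_eq_mul (1 - t),
    intervalIntegral.smul_integral_comp_mul_add]
  simp

/-- The curve that runs through `P` on `[0, 1/2]` and through `Q` on `[1/2, 1]`. Clamping the
parameters exhibits it as a sum of Lipschitz curves. -/
def concatCurve (P : AdmissiblePath x y) (Q : AdmissiblePath y z) (s : ℝ) : Heis :=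
  P.γ (min (2 * s) 1) + Q.γ (max (2 * s - 1) 0) - y

lemma concatCurve_of_le (P : AdmissiblePath x y) (Q : AdmissiblePath y z) {s : ℝ}
    (hs : s ≤ 1 / 2) : concatCurve P Q s = P.γ (2 * s + 0) := by
  rw [concatCurve, min_eq_left (by linarith), max_eq_right (by linarith), Q.start,
    add_sub_cancel_right, add_zero]

lemma concatCurve_of_ge (P : AdmissiblePath x y) (Q : AdmissiblePath y z) {s : ℝ}
    (hs : 1 / 2 ≤ s) : concatCurve P Q s = Q.γ (2 * s + -1) := by
  rw [concatCurve, min_eq_right (by linarith), max_eq_left (by linarith), P.endpoint,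
    add_sub_cancel_left, sub_eq_add_neg]

lemma exists_lipschitzOnWith_concatCurve (P : AdmissiblePath x y) (Q : AdmissiblePath y z) :
    ∃ K, LipschitzOnWith K (concatCurve P Q) (Set.Icc 0 1) := by
  obtain ⟨K, hK⟩ := P.lipschitz
  obtain ⟨L, hL⟩ := Q.lipschitz
  have h2 : LipschitzWith 2 fun s : ℝ => 2 * s :=
    LipschitzWith.of_dist_le_mul fun u v => by simp [Real.dist_eq, ← mul_sub, abs_mul]
  have hP := hK.comp (h2.min_const 1).lipschitzOnWith (s := Set.Icc 0 1)
    fun s hs => ⟨le_min (by linarith [hs.1]) zero_le_one, min_le_right _ _⟩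
  have hQ := hL.comp ((h2.sub (LipschitzWith.const 1)).max_const 0).lipschitzOnWith
    (s := Set.Icc 0 1)
    fun s hs => ⟨le_max_right _ _, max_le (sub_le_iff_le_add.2 (by linarith [hs.2])) zero_le_one⟩
  exact ⟨_, (hP.add hQ).sub (LipschitzWith.const y).lipschitzOnWith⟩

/-- The concatenation of two admissible paths. -/
def trans (P : AdmissiblePath x y) (Q : AdmissiblePath y z) : AdmissiblePath x z where
  γ := concatCurve P Q
  a1 s := if s ≤ 1 / 2 then 2 * P.a1 (2 * s + 0) else 2 * Q.a1 (2 * s + -1)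
  a2 s := if s ≤ 1 / 2 then 2 * P.a2 (2 * s + 0) else 2 * Q.a2 (2 * s + -1)
  lipschitz := exists_lipschitzOnWith_concatCurve P Q
  meas1 := by
    have := P.meas1
    have := Q.meas1
    exact Measurable.ite measurableSet_Iic (by fun_prop) (by fun_prop)
  meas2 := by
    have := P.meas2
    have := Q.meas2
    exact Measurable.ite measurableSet_Iic (by fun_prop) (by fun_prop)
  start := by simp [concatCurve, P.start, Q.start]
  endpoint := by norm_num [concatCurve, P.endpoint, Q.endpoint]
  admissible := by
    rw [ae_restrict_iff' measurableSet_Icc]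
    filter_upwards [P.ae_hasDerivAt_comp_affine two_ne_zero 0,
      Q.ae_hasDerivAt_comp_affine two_ne_zero (-1), Measure.ae_ne volume (1 / 2)]
      with s hP hQ hne hs
    rcases hne.lt_or_gt with hlt | hgt
    · have heq : concatCurve P Q =ᶠ[𝓝 s] fun u => P.γ (2 * u + 0) := by
        filter_upwards [gt_mem_nhds hlt] with u hu using concatCurve_of_le P Q hu.le
      simp only [if_pos hlt.le, heq.eq_of_nhds]
      exact (hP ⟨by linarith [hs.1], by linarith⟩).congr_of_eventuallyEq heq
    · have heq : concatCurve P Q =ᶠ[𝓝 s] fun u => Q.γ (2 * u + -1) := by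
        filter_upwards [lt_mem_nhds hgt] with u hu using concatCurve_of_ge P Q hu.le
      simp only [if_neg hgt.not_ge, heq.eq_of_nhds]
      exact (hQ ⟨by linarith, by linarith [hs.2]⟩).congr_of_eventuallyEq heq

lemma pathLength_trans (P : AdmissiblePath x y) (Q : AdmissiblePath y z) :
    pathLength (P.trans Q) = pathLength P + pathLength Q := by
  set R := P.trans Q
  have hfirst : ∫ s in (0 : ℝ)..1 / 2, R.speed s = pathLength P := by
    have hspeed : Set.EqOn R.speed (fun s => 2 * P.speed (2 * s + 0)) (Set.uIcc 0 (1 / 2)) := by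
      intro s hs
      rw [Set.uIcc_of_le (by norm_num)] at hs
      simp only [speed, R, trans, if_pos hs.2]
      exact sqrt_sq_mul_add_sq_mul zero_le_two _ _
    rw [intervalIntegral.integral_congr hspeed, intervalIntegral.integral_const_mul,
      ← smul_eq_mul (2 : ℝ), intervalIntegral.smul_integral_comp_mul_add,
      pathLength_eq_intervalIntegral]
    norm_num
  have hsecond : ∫ s in (1 / 2 : ℝ)..1, R.speed s = pathLength Q := by
    have hspeed : Set.EqOn R.speed (fun s => 2 * Q.speed (2 * s + -1)) (Set.Ioo (1 / 2) 1) := by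
      intro s hs
      simp only [speed, R, trans, if_neg hs.1.not_ge]
      exact sqrt_sq_mul_add_sq_mul zero_le_two _ _
    rw [intervalIntegral.integral_congr_Ioo_of_le (by norm_num) hspeed,
      intervalIntegral.integral_const_mul, ← smul_eq_mul (2 : ℝ),
      intervalIntegral.smul_integral_comp_mul_add, pathLength_eq_intervalIntegral]
    norm_num
  rw [pathLength_eq_intervalIntegral, ← hfirst, ← hsecond,
    intervalIntegral.integral_add_adjacent_intervals
      (R.intervalIntegrable_speed le_rfl (by norm_num) (by norm_num))
      (R.intervalIntegrable_speed (by norm_num) (by norm_num) le_rfl)]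

/-- The horizontal segment from `x` to `x · (a, b, 0)`. -/
def segment (x : Heis) (a b : ℝ) : AdmissiblePath x (Hmul x (hor a b)) where
  γ s := Hmul x (hor (s * a) (s * b))
  a1 _ := a
  a2 _ := b
  lipschitz := by
    refine ⟨‖horVec a b x‖₊, (LipschitzWith.of_dist_le_mul fun u v => ?_).lipschitzOnWith⟩
    simp only [Hmul_hor_mul, dist_add_left]
    rw [dist_eq_norm, ← sub_smul, norm_smul, mul_comm, coe_nnnorm, Real.dist_eq, Real.norm_eq_abs]
  meas1 := measurable_const
  meas2 := measurable_const
  start := by simp [Hmul, hor]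
  endpoint := by simp
  admissible := .of_forall (hasDerivAt_Hmul_hor_mul x a b)

lemma pathLength_segment (x : Heis) (a b : ℝ) :
    pathLength (segment x a b) = √(a ^ 2 + b ^ 2) := by
  simp [pathLength, segment]

end AdmissiblePath

/-! ### The Carnot–Carathéodory norm -/

lemma exists_mem_hbox (x : Heis) : ∃ r, 0 < r ∧ x ∈ hbox r := by
  have h1 := abs_nonneg x.1
  have h2 := abs_nonneg x.2.1
  have h3 := abs_nonneg x.2.2
  exact ⟨|x.1| + |x.2.1| + |x.2.2| + 1, by positivity, by linarith, by linarith, by nlinarith⟩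

lemma sqrt_sq_add_sq_le {a b r : ℝ} (ha : |a| ≤ r) (hb : |b| ≤ r) : √(a ^ 2 + b ^ 2) ≤ 2 * r := by
  have hr : 0 ≤ r := (abs_nonneg a).trans ha
  rw [Real.sqrt_le_left (by positivity)]
  nlinarith [sq_le_sq' (neg_le_of_abs_le ha) (le_of_abs_le ha),
    sq_le_sq' (neg_le_of_abs_le hb) (le_of_abs_le hb)]

lemma IsHorProd.exists_pathLength_le {r : ℝ} {n : ℕ} {k : Heis} (hk : IsHorProd r n k)
    (x : Heis) : ∃ P : AdmissiblePath x (Hmul x k), pathLength P ≤ n * (2 * r) := by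
  induction hk with
  | one => exact ⟨AdmissiblePath.segment x 0 0,
      (AdmissiblePath.pathLength_segment x 0 0).trans_le (by simp)⟩
  | @mul_hor n k a b _ ha hb ih =>
    obtain ⟨P, hP⟩ := ih
    have hab := sqrt_sq_add_sq_le ha hb
    rw [← Hmul_assoc]
    refine ⟨P.trans (AdmissiblePath.segment _ a b), ?_⟩
    rw [AdmissiblePath.pathLength_trans, AdmissiblePath.pathLength_segment]
    push_cast
    linarith

lemma exists_pathLength_le_of_mem_hbox {r : ℝ} {h : Heis} (hr : 0 < r) (hh : h ∈ hbox r)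
    (x : Heis) : ∃ P : AdmissiblePath x (Hmul x h), pathLength P ≤ 10 * r := by
  obtain ⟨P, hP⟩ := (isHorProd_five_of_mem_hbox hr hh).exists_pathLength_le x
  exact ⟨P, hP.trans_eq (by push_cast; ring)⟩

lemma nonempty_admissiblePath (x y : Heis) : Nonempty (AdmissiblePath x y) := by
  obtain ⟨r, hr, hxy⟩ := exists_mem_hbox (Hmul (-x) y)
  obtain ⟨P, -⟩ := exists_pathLength_le_of_mem_hbox hr hxy x
  rw [Hmul_neg_cancel_left] at P
  exact ⟨P⟩

lemma ccDist_le_pathLength {x y : Heis} (P : AdmissiblePath x y) : ccDist x y ≤ pathLength P :=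
  csInf_le ⟨0, by rintro _ ⟨Q, rfl⟩; exact Q.pathLength_nonneg⟩ ⟨P, rfl⟩

lemma exists_pathLength_lt {x y : Heis} {t : ℝ} (ht : ccDist x y < t) :
    ∃ P : AdmissiblePath x y, pathLength P < t := by
  obtain ⟨P₀⟩ := nonempty_admissiblePath x y
  obtain ⟨_, ⟨P, rfl⟩, hP⟩ := exists_lt_of_csInf_lt
    (s := {l | ∃ P : AdmissiblePath x y, l = pathLength P}) ⟨_, P₀, rfl⟩ ht
  exact ⟨P, hP⟩

lemma ccDist_triangle (x y z : Heis) : ccDist x z ≤ ccDist x y + ccDist y z := by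
  refine le_of_forall_pos_le_add fun ε hε => ?_
  obtain ⟨P, hP⟩ := exists_pathLength_lt (lt_add_of_pos_right (ccDist x y) (half_pos hε))
  obtain ⟨Q, hQ⟩ := exists_pathLength_lt (lt_add_of_pos_right (ccDist y z) (half_pos hε))
  have hPQ := ccDist_le_pathLength (P.trans Q)
  rw [AdmissiblePath.pathLength_trans] at hPQ
  linarith

lemma ccDist_Hmul_le {r : ℝ} {h : Heis} (hr : 0 < r) (hh : h ∈ hbox r) (x : Heis) :
    ccDist x (Hmul x h) ≤ 10 * r := by
  obtain ⟨P, hP⟩ := exists_pathLength_le_of_mem_hbox hr hh x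
  exact (ccDist_le_pathLength P).trans hP

lemma ccNorm_nonneg (x : Heis) : 0 ≤ ccNorm x :=
  Real.sInf_nonneg (by rintro _ ⟨P, rfl⟩; exact P.pathLength_nonneg)

lemma ccNorm_le_Hmul_add {r : ℝ} {h : Heis} (hr : 0 < r) (hh : h ∈ hbox r) (x : Heis) :
    ccNorm x ≤ ccNorm (Hmul x h) + 10 * r := by
  have htri := ccDist_triangle x (Hmul x h) He
  have hstep := ccDist_Hmul_le hr hh x
  simp only [ccNorm]
  linarith

lemma ccNorm_Hmul_le {r : ℝ} {h : Heis} (hr : 0 < r) (hh : h ∈ hbox r) (x : Heis) :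
    ccNorm (Hmul x h) ≤ ccNorm x + 10 * r := by
  simpa only [Hmul_neg_cancel_right] using ccNorm_le_Hmul_add hr (neg_mem_hbox hh) (Hmul x h)

lemma ccNorm_le_of_mem_hbox {r : ℝ} {h : Heis} (hr : 0 < r) (hh : h ∈ hbox r) :
    ccNorm h ≤ 10 * r := by
  have hdist := ccDist_Hmul_le hr (neg_mem_hbox hh) h
  have hinv := Hmul_neg_cancel_right He h
  rw [He_Hmul] at hinv
  rwa [hinv] at hdist

lemma mem_hbox_of_ccNorm_lt {x : Heis} {t : ℝ} (ht : ccNorm x < t) : x ∈ hbox t := by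
  obtain ⟨P, hP⟩ := exists_pathLength_lt ht
  have hdisp := P.neg_Hmul_mem_hbox ⟨zero_le_one, le_rfl⟩
  rw [P.endpoint, Hmul_He, ← P.pathLength_eq_intervalIntegral] at hdisp
  exact hbox_mono P.pathLength_nonneg hP.le (by simpa only [neg_neg] using neg_mem_hbox hdisp)

lemma AdmissiblePath.exists_integral_speed_eq {x y : Heis} (P : AdmissiblePath x y) {r : ℝ}
    (hr : 0 ≤ r) (hrP : r < pathLength P) :
    ∃ t, 0 ≤ t ∧ t < 1 ∧ ∫ s in (0 : ℝ)..t, P.speed s = r := by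
  rw [P.pathLength_eq_intervalIntegral] at hrP
  have hcont : ContinuousOn (fun t => ∫ s in (0 : ℝ)..t, P.speed s) (Set.Icc 0 1) := by
    rw [← Set.uIcc_of_le zero_le_one]
    refine intervalIntegral.continuousOn_primitive_interval ?_
    rw [Set.uIcc_of_le zero_le_one]
    exact P.integrableOn_speed
  obtain ⟨t, ht, hrt⟩ := intermediate_value_Ico zero_le_one hcont
    ⟨by rwa [intervalIntegral.integral_same], hrP⟩
  exact ⟨t, ht.1, ht.2, hrt⟩

lemma exists_mem_hbox_ccNorm_Hmul_le {x : Heis} {r δ : ℝ} (hr : 0 < r) (hx : r < ccNorm x)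
    (hδ : δ < r) : ∃ g ∈ hbox r, ccNorm (Hmul x g) ≤ ccNorm x - δ := by
  obtain ⟨P, hP⟩ := exists_pathLength_lt (t := ccNorm x + (r - δ))
    (lt_add_of_pos_right (ccNorm x) (sub_pos.2 hδ))
  obtain ⟨t, h0, h1, htr⟩ :=
    P.exists_integral_speed_eq hr.le (hx.trans_le (ccDist_le_pathLength P))
  refine ⟨Hmul (-x) (P.γ t), htr ▸ P.neg_Hmul_mem_hbox ⟨h0, h1.le⟩, ?_⟩
  have htail := ccDist_le_pathLength (P.tail h0 h1)
  have hsplit := intervalIntegral.integral_add_adjacent_intervals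
    (P.intervalIntegrable_speed le_rfl h0 h1.le) (P.intervalIntegrable_speed h0 h1.le le_rfl)
  rw [← P.pathLength_tail h0 h1, ← P.pathLength_eq_intervalIntegral, htr] at hsplit
  rw [Hmul_neg_cancel_left, ccNorm]
  linarith

lemma hbox_mem_nhds_zero {r : ℝ} (hr : 0 < r) : hbox r ∈ 𝓝 (0 : Heis) := by
  rw [hbox_eq_prod]
  refine prod_mem_nhds (Icc_mem_nhds ?_ ?_)
    (prod_mem_nhds (Icc_mem_nhds ?_ ?_) (Icc_mem_nhds ?_ ?_)) <;> simp [hr]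

@[fun_prop]
lemma continuous_ccNorm : Continuous ccNorm := by
  refine Metric.continuous_iff'.2 fun x ε hε => ?_
  have hr : 0 < ε / 20 := by positivity
  have htendsto : Tendsto (fun y => Hmul (-x) y) (𝓝 x) (𝓝 0) := by
    have hzero : Hmul (-x) x = 0 := by
      ext <;> simp only [Hmul, Prod.fst_neg, Prod.snd_neg, Prod.fst_zero, Prod.snd_zero] <;> ring
    simpa only [hzero] using
      (by fun_prop : Continuous fun y : Heis => Hmul (-x) y).tendsto x
  filter_upwards [htendsto (hbox_mem_nhds_zero hr)] with y hy
  have hle := ccNorm_Hmul_le hr hy x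
  have hge := ccNorm_le_Hmul_add hr hy x
  rw [Hmul_neg_cancel_left] at hle hge
  rw [Real.dist_eq, abs_lt]
  constructor <;> linarith

@[fun_prop]
lemma measurable_ccNorm : Measurable ccNorm := continuous_ccNorm.measurable

/-! ### Difference quotients along the group -/

lemma continuous_gradLen {f : Heis → ℝ} (hf : ContDiff ℝ 1 f) : Continuous (gradLen f) := by
  have := hf.continuous_fderiv one_ne_zero
  unfold gradLen X1 X2
  fun_prop

lemma gradLen_nonneg (f : Heis → ℝ) (x : Heis) : 0 ≤ gradLen f x := Real.sqrt_nonneg _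

lemma fderiv_horVec (f : Heis → ℝ) (a b : ℝ) (x : Heis) :
    fderiv ℝ f x (horVec a b x) = a * X1 f x + b * X2 f x := by
  have hdecomp : horVec a b x = a • ((1, 0, 0) : Heis) + b • ((0, 1, 0) : Heis) +
      ((x.1 * b - x.2.1 * a) / 2) • ((0, 0, 1) : Heis) := by
    simp [horVec_eq]
  rw [hdecomp, map_add, map_add, map_smul, map_smul, map_smul]
  simp only [X1, X2, smul_eq_mul]
  ring

lemma abs_fderiv_horVec_le (f : Heis → ℝ) (a b : ℝ) (x : Heis) :
    |fderiv ℝ f x (horVec a b x)| ≤ √(a ^ 2 + b ^ 2) * gradLen f x := by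
  rw [fderiv_horVec, gradLen, ← Real.sqrt_mul (by positivity)]
  apply Real.abs_le_sqrt
  nlinarith [sq_nonneg (a * X2 f x - b * X1 f x)]

lemma enorm_Hmul_hor_sub_le {f : Heis → ℝ} (hf : ContDiff ℝ 1 f) (x : Heis) (a b : ℝ) :
    ‖f (Hmul x (hor a b)) - f x‖ₑ ≤ ENNReal.ofReal √(a ^ 2 + b ^ 2) *
      ∫⁻ s in Set.Icc (0 : ℝ) 1, ‖gradLen f (Hmul x (hor (s * a) (s * b)))‖ₑ := by
  set c : ℝ → Heis := fun s => Hmul x (hor (s * a) (s * b)) with hc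
  have hcc : Continuous c := by unfold c hor; fun_prop
  have hG : Continuous fun s => gradLen f (c s) := (continuous_gradLen hf).comp hcc
  have hderiv (s : ℝ) : HasDerivAt (fun s => f (c s)) (fderiv ℝ f (c s) (horVec a b (c s))) s :=
    (hf.differentiable one_ne_zero (c s)).hasFDerivAt.comp_hasDerivAt s
      (hasDerivAt_Hmul_hor_mul x a b s)
  have hcont : Continuous fun s => fderiv ℝ f (c s) (horVec a b (c s)) := by
    have := (hf.continuous_fderiv one_ne_zero).comp hcc
    simp only [horVec_eq]
    fun_prop
  have hftc := intervalIntegral.integral_eq_sub_of_hasDerivAt (fun s _ => hderiv s)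
    (hcont.intervalIntegrable 0 1)
  have h0 : c 0 = x := by simp [hc, hor, Hmul]
  have h1 : c 1 = Hmul x (hor a b) := by simp [hc]
  rw [h0, h1, intervalIntegral.integral_of_le zero_le_one, ← integral_Icc_eq_integral_Ioc] at hftc
  rw [← hftc, ← lintegral_const_mul _ hG.measurable.enorm]
  refine (enorm_integral_le_lintegral_enorm _).trans (lintegral_mono fun s => ?_)
  rw [Real.enorm_eq_ofReal_abs, Real.enorm_of_nonneg (gradLen_nonneg f (c s)),
    ← ENNReal.ofReal_mul (Real.sqrt_nonneg _)]
  exact ENNReal.ofReal_le_ofReal (abs_fderiv_horVec_le f a b (c s))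

lemma lintegral_rpow_le_lintegral_rpow {α : Type*} [MeasurableSpace α] {μ : Measure α}
    [IsProbabilityMeasure μ] {q : ℝ} (hq : 1 ≤ q) {g : α → ℝ≥0∞} (hg : AEMeasurable g μ) :
    (∫⁻ a, g a ∂μ) ^ q ≤ ∫⁻ a, g a ^ q ∂μ := by
  have h := eLpNorm'_le_eLpNorm'_of_exponent_le (μ := μ) one_pos hq hg.aestronglyMeasurable
  simp only [eLpNorm', enorm_eq_self, ENNReal.rpow_one, one_div, inv_one] at h
  rwa [ENNReal.le_rpow_inv_iff (by positivity)] at h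

/-- Right translations by elements of `S` map `μ` restricted to `A` below `K` times `μ`
restricted to `A'`. This is the only property of a measure needed to bound difference quotients of
a function by its sub-gradient. -/
def TranslationBound (μ : Measure Heis) (A A' S : Set Heis) (K : ℝ≥0∞) : Prop :=
  ∀ k ∈ S, (μ.restrict A).map (fun x => Hmul x k) ≤ K • μ.restrict A'

lemma Hmul_hor_mul_mem_hbox {s : ℝ} (hs : s ∈ Set.Icc (0 : ℝ) 1) {k : Heis} {t r a b : ℝ}
    (hk : k ∈ hbox t) (ha : |a| ≤ r) (hb : |b| ≤ r) :
    Hmul k (hor (s * a) (s * b)) ∈ hbox (t + r) := by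
  have hle {c : ℝ} (hc : |c| ≤ r) : |s * c| ≤ r := by
    rw [abs_mul, abs_of_nonneg hs.1]
    exact (mul_le_of_le_one_left (abs_nonneg c) hs.2).trans hc
  exact Hmul_mem_hbox hk (hor_mem_hbox (hle ha) (hle hb))

namespace TranslationBound

variable {μ : Measure Heis} {A A' S : Set Heis} {K : ℝ≥0∞}

lemma lintegral_comp_le (hμ : TranslationBound μ A A' S K) {k : Heis} (hk : k ∈ S)
    {φ : Heis → ℝ≥0∞} (hφ : Measurable φ) :
    ∫⁻ x in A, φ (Hmul x k) ∂μ ≤ K * ∫⁻ x in A', φ x ∂μ := by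
  rw [← lintegral_map hφ (by fun_prop), ← smul_eq_mul, ← lintegral_smul_measure]
  exact lintegral_mono' (hμ k hk) le_rfl

lemma of_withDensity {ρ : Heis → ℝ≥0∞} (hρ : Measurable ρ) (hA : MeasurableSet A)
    (hA' : MeasurableSet A') (h : ∀ x ∈ A, ∀ k ∈ S, Hmul x k ∈ A' ∧ ρ x ≤ K * ρ (Hmul x k)) :
    TranslationBound (volume.withDensity ρ) A A' S K := by
  intro k hk
  refine Measure.le_iff.2 fun s hs => ?_
  have hmeas : Measurable fun x => Hmul x k := by fun_prop
  rw [Measure.map_apply hmeas hs, Measure.restrict_apply (hmeas hs), Measure.smul_apply,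
    Measure.restrict_apply hs, withDensity_apply _ ((hmeas hs).inter hA),
    withDensity_apply _ (hs.inter hA'), smul_eq_mul, ← lintegral_const_mul _ hρ,
    ← lintegral_indicator ((hmeas hs).inter hA), ← lintegral_indicator (hs.inter hA'),
    ← (measurePreserving_Hmul_right k).lintegral_comp ((hρ.const_mul K).indicator (hs.inter hA'))]
  refine lintegral_mono fun x => Set.indicator_apply_le' (fun hx => ?_) fun _ => zero_le
  obtain ⟨hxk, hle⟩ := h x hx.2 k hk
  have hmem : Hmul x k ∈ s ∩ A' := ⟨hx.1, hxk⟩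
  rwa [Set.indicator_of_mem hmem]

variable {q R : ℝ} {f : Heis → ℝ}

lemma lintegral_hor_step_le [SFinite μ] (hμ : TranslationBound μ A A' (hbox R) K) (hq : 1 ≤ q)
    (hf : ContDiff ℝ 1 f) {k : Heis} {t r a b : ℝ} (hk : k ∈ hbox t) (ha : |a| ≤ r) (hb : |b| ≤ r)
    (hR : t + r ≤ R) :
    ∫⁻ x in A, ‖f (Hmul (Hmul x k) (hor a b)) - f (Hmul x k)‖ₑ ^ q ∂μ ≤
      ENNReal.ofReal (2 * r) ^ q * (K * ∫⁻ x in A', ‖gradLen f x‖ₑ ^ q ∂μ) := by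
  have hr : 0 ≤ r := (abs_nonneg a).trans ha
  have ht : 0 ≤ t := (abs_nonneg k.1).trans hk.1
  have hprob : IsProbabilityMeasure (volume.restrict (Set.Icc (0 : ℝ) 1)) := ⟨by simp⟩
  have hG : Measurable fun x => ‖gradLen f x‖ₑ ^ q :=
    (continuous_gradLen hf).measurable.enorm.pow_const q
  have hjoint : Measurable fun z : Heis × ℝ =>
      ‖gradLen f (Hmul (Hmul z.1 k) (hor (z.2 * a) (z.2 * b)))‖ₑ ^ q :=
    hG.comp (by unfold hor; fun_prop)
  have hmem {s : ℝ} (hs : s ∈ Set.Icc (0 : ℝ) 1) : Hmul k (hor (s * a) (s * b)) ∈ hbox R :=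
    hbox_mono (by positivity) hR (Hmul_hor_mul_mem_hbox hs hk ha hb)
  calc ∫⁻ x in A, ‖f (Hmul (Hmul x k) (hor a b)) - f (Hmul x k)‖ₑ ^ q ∂μ
      ≤ ∫⁻ x in A, ENNReal.ofReal (2 * r) ^ q * ∫⁻ s in Set.Icc (0 : ℝ) 1,
          ‖gradLen f (Hmul (Hmul x k) (hor (s * a) (s * b)))‖ₑ ^ q ∂volume ∂μ := by
        refine lintegral_mono fun x => ?_
        refine (ENNReal.rpow_le_rpow (enorm_Hmul_hor_sub_le hf (Hmul x k) a b)
          (by positivity)).trans ?_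
        rw [ENNReal.mul_rpow_of_nonneg _ _ (by positivity)]
        gcongr
        · exact sqrt_sq_add_sq_le ha hb
        · exact lintegral_rpow_le_lintegral_rpow hq
            ((continuous_gradLen hf).measurable.enorm.comp (by unfold hor; fun_prop)).aemeasurable
    _ = ENNReal.ofReal (2 * r) ^ q * ∫⁻ s in Set.Icc (0 : ℝ) 1, ∫⁻ x in A,
          ‖gradLen f (Hmul x (Hmul k (hor (s * a) (s * b))))‖ₑ ^ q ∂μ := by
        rw [lintegral_const_mul _ hjoint.lintegral_prod_right',
          lintegral_lintegral_swap hjoint.aemeasurable]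
        simp only [Hmul_assoc]
    _ ≤ ENNReal.ofReal (2 * r) ^ q * ∫⁻ _ in Set.Icc (0 : ℝ) 1,
          K * ∫⁻ x in A', ‖gradLen f x‖ₑ ^ q ∂μ := by
        refine mul_le_mul_right ?_ _
        exact setLIntegral_mono' measurableSet_Icc fun s hs => hμ.lintegral_comp_le (hmem hs) hG
    _ = _ := by simp

lemma lintegral_horProd_le [SFinite μ] (hμ : TranslationBound μ A A' (hbox R) K) (hq : 1 ≤ q)
    (hf : ContDiff ℝ 1 f) {k : Heis} {n : ℕ} {r : ℝ} (hk : IsHorProd r n k) (hR : n * r ≤ R) :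
    (∫⁻ x in A, ‖f (Hmul x k) - f x‖ₑ ^ q ∂μ) ^ (1 / q) ≤
      n * (ENNReal.ofReal (2 * r) ^ q * (K * ∫⁻ x in A', ‖gradLen f x‖ₑ ^ q ∂μ)) ^ (1 / q) := by
  have hq0 : 0 < q := by positivity
  induction hk with
  | one => simp [Hmul_He, hq0]
  | @mul_hor n k a b hk ha hb ih =>
    rw [Nat.cast_succ, add_one_mul] at hR
    have hstep := ENNReal.rpow_le_rpow (hμ.lintegral_hor_step_le hq hf hk.mem_hbox ha hb hR)
      (one_div_nonneg.2 hq0.le)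
    have htriangle := eLpNorm'_add_le (μ := μ.restrict A)
      (f := fun x => f (Hmul (Hmul x k) (hor a b)) - f (Hmul x k))
      (g := fun x => f (Hmul x k) - f x) (by fun_prop) (by fun_prop) hq
    simp only [eLpNorm', Pi.add_apply, sub_add_sub_cancel, Hmul_assoc] at htriangle
    refine htriangle.trans ((add_le_add (by simpa only [Hmul_assoc] using hstep)
      (ih (by linarith [(abs_nonneg a).trans ha]))).trans_eq ?_)
    push_cast
    ring

lemma lintegral_Hmul_sub_le [SFinite μ] {r : ℝ} (hμ : TranslationBound μ A A' (hbox (5 * r)) K)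
    (hq : 1 ≤ q) (hf : ContDiff ℝ 1 f) (hr : 0 < r) {h : Heis} (hh : h ∈ hbox r) :
    ∫⁻ x in A, ‖f (Hmul x h) - f x‖ₑ ^ q ∂μ ≤
      ENNReal.ofReal (10 * r) ^ q * K * ∫⁻ x in A', ‖gradLen f x‖ₑ ^ q ∂μ := by
  have hq0 : 0 < q := by positivity
  have hnorm := hμ.lintegral_horProd_le hq hf (isHorProd_five_of_mem_hbox hr hh) (by simp)
  rw [one_div, ENNReal.rpow_inv_le_iff hq0, ENNReal.mul_rpow_of_nonneg _ _ hq0.le,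
    ENNReal.rpow_inv_rpow hq0.ne', ← mul_assoc, ← ENNReal.mul_rpow_of_nonneg _ _ hq0.le,
    ← mul_assoc] at hnorm
  convert hnorm using 4
  rw [show 10 * r = 5 * (2 * r) by ring, ENNReal.ofReal_mul (by norm_num)]
  norm_num

end TranslationBound

/-! ### The Gibbs measure `muP` -/

lemma rpow_sub_rpow_le {p a b : ℝ} (hp : 1 < p) (ha : 0 ≤ a) (hb : 0 ≤ b) :
    a ^ p - b ^ p ≤ p * a ^ (p - 1) * (a - b) := by
  rcases ha.eq_or_lt with rfl | ha
  · rw [Real.zero_rpow (by linarith), Real.zero_rpow (by linarith)]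
    simp [Real.rpow_nonneg hb p]
  have hbernoulli := one_add_mul_self_le_rpow_one_add (s := b / a - 1)
    (by linarith [div_nonneg hb ha.le]) hp.le
  rw [add_sub_cancel, Real.div_rpow hb ha.le, le_div_iff₀ (Real.rpow_pos_of_pos ha p)]
    at hbernoulli
  have hpow : a ^ p = a ^ (p - 1) * a := by rw [← Real.rpow_add_one ha.ne', sub_add_cancel]
  have hexpand : (1 + p * (b / a - 1)) * a ^ p = a ^ p - p * a ^ (p - 1) * (a - b) := by
    rw [hpow]
    field_simp
    ring
  linarith

lemma one_add_norm_pow_le (x : Heis) : (1 + ‖x‖) ^ 4 ≤ 16 * (1 + ccNorm x) ^ 8 := by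
  have hd := ccNorm_nonneg x
  obtain ⟨h1, h2, h3⟩ := mem_hbox_of_ccNorm_lt (lt_one_add (ccNorm x))
  have hself : 1 + ccNorm x ≤ (1 + ccNorm x) ^ 2 := le_self_pow₀ (by linarith) two_ne_zero
  have hnorm : ‖x‖ ≤ (1 + ccNorm x) ^ 2 := by
    simp only [Prod.norm_def, Real.norm_eq_abs, max_le_iff]
    exact ⟨h1.trans hself, h2.trans hself, h3⟩
  calc (1 + ‖x‖) ^ 4 ≤ (2 * (1 + ccNorm x) ^ 2) ^ 4 := by gcongr; nlinarith
    _ = 16 * (1 + ccNorm x) ^ 8 := by ring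

section Normalization

variable {p β : ℝ}

lemma exp_neg_ccNorm_rpow_le (hp : 1 ≤ p) (hβ : 0 < β) (x : Heis) :
    Real.exp (-β * ccNorm x ^ p) ≤
      Real.exp (2 * β) * (16 * Nat.factorial 8 / β ^ 8) * (1 + ‖x‖) ^ (-4 : ℝ) := by
  have hd := ccNorm_nonneg x
  have hpow : ccNorm x - 1 ≤ ccNorm x ^ p := by
    rcases le_total 1 (ccNorm x) with h1 | h1
    · linarith [Real.self_le_rpow_of_one_le h1 hp]
    · linarith [Real.rpow_nonneg hd p]
  have hexp := Real.pow_div_factorial_le_exp (β * (1 + ccNorm x)) (by positivity) 8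
  rw [div_le_iff₀ (by positivity), mul_pow] at hexp
  rw [Real.rpow_neg (by positivity), ← div_eq_mul_inv, le_div_iff₀ (by positivity),
    show (4 : ℝ) = (4 : ℕ) by norm_num, Real.rpow_natCast]
  calc Real.exp (-β * ccNorm x ^ p) * (1 + ‖x‖) ^ 4
      ≤ Real.exp (2 * β + -(β * (1 + ccNorm x))) * (16 * (1 + ccNorm x) ^ 8) := by
        gcongr
        · nlinarith
        · exact one_add_norm_pow_le x
    _ ≤ Real.exp (2 * β + -(β * (1 + ccNorm x))) *
          (16 * (Real.exp (β * (1 + ccNorm x)) * Nat.factorial 8 / β ^ 8)) := by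
        gcongr
        rwa [le_div_iff₀ (by positivity), mul_comm]
    _ = Real.exp (2 * β) * (16 * Nat.factorial 8 / β ^ 8) := by
        rw [Real.exp_add, Real.exp_neg]
        field_simp

lemma integrable_exp_neg_ccNorm_rpow (hp : 1 ≤ p) (hβ : 0 < β) :
    Integrable fun x : Heis => Real.exp (-β * ccNorm x ^ p) := by
  have hdecay : Integrable fun x : Heis => (1 + ‖x‖) ^ (-4 : ℝ) :=
    have : (volume : Measure Heis).IsAddHaarMeasure :=
      Measure.prod.instIsAddHaarMeasure volume volume
    integrable_one_add_norm (by norm_num [Module.finrank_prod])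
  refine (hdecay.const_mul (Real.exp (2 * β) * (16 * Nat.factorial 8 / β ^ 8))).mono'
    (by fun_prop : Measurable _).aestronglyMeasurable (.of_forall fun x => ?_)
  rw [Real.norm_of_nonneg (Real.exp_nonneg _)]
  exact exp_neg_ccNorm_rpow_le hp hβ x

lemma isProbabilityMeasure_muP (hp : 1 ≤ p) (hβ : 0 < β) : IsProbabilityMeasure (muP p β) :=
  isProbabilityMeasure_tilted (integrable_exp_neg_ccNorm_rpow hp hβ)

lemma translationBound_muP (hβ : 0 ≤ β) {A A' S : Set Heis} (hA : MeasurableSet A)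
    (hA' : MeasurableSet A') {c : ℝ}
    (h : ∀ x ∈ A, ∀ k ∈ S, Hmul x k ∈ A' ∧ ccNorm (Hmul x k) ^ p ≤ ccNorm x ^ p + c) :
    TranslationBound (muP p β) A A' S (ENNReal.ofReal (Real.exp (β * c))) := by
  refine .of_withDensity (by fun_prop) hA hA'
    fun x hx k hk => ⟨(h x hx k hk).1, ?_⟩
  have : 0 ≤ ∫ y : Heis, Real.exp (-β * ccNorm y ^ p) :=
    integral_nonneg fun _ => Real.exp_nonneg _
  rw [← ENNReal.ofReal_mul (Real.exp_nonneg _), ← mul_div_assoc, ← Real.exp_add]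
  refine ENNReal.ofReal_le_ofReal ?_
  gcongr
  nlinarith [(h x hx k hk).2]

lemma translationBound_muP_hbox (hp : 1 < p) (hβ : 0 ≤ β) {A A' : Set Heis}
    (hA : MeasurableSet A) (hA' : MeasurableSet A') {R s : ℝ} (hs : 0 < s)
    (hAA' : ∀ x ∈ A, ∀ k ∈ hbox s, Hmul x k ∈ A') (hR : ∀ x ∈ A, ccNorm x + 10 * s ≤ R) :
    TranslationBound (muP p β) A A' (hbox s)
      (ENNReal.ofReal (Real.exp (β * (p * R ^ (p - 1) * (10 * s))))) := by
  refine translationBound_muP hβ hA hA' fun x hx k hk => ⟨hAA' x hx k hk, ?_⟩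
  have hd := ccNorm_nonneg (Hmul x k)
  have hle := ccNorm_Hmul_le hs hk x
  have hRx := hR x hx
  have : 0 ≤ R := by linarith
  have htangent := rpow_sub_rpow_le hp hd (ccNorm_nonneg x)
  have : p * ccNorm (Hmul x k) ^ (p - 1) * (ccNorm (Hmul x k) - ccNorm x) ≤
      p * R ^ (p - 1) * (10 * s) := by
    refine (mul_le_mul_of_nonneg_left (sub_le_iff_le_add'.2 hle) (by positivity)).trans ?_
    gcongr
    linarith
  linarith

end Normalization

/-! ### Decay of `‖f‖ ^ q` on shells -/

lemma volume_hbox_mul {c r : ℝ} (hc : 0 ≤ c) (hr : 0 ≤ r) :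
    volume (hbox (c * r)) = ENNReal.ofReal (c ^ 4) * volume (hbox r) := by
  rw [volume_hbox hr, volume_hbox (by positivity), ← ENNReal.ofReal_mul (by positivity)]
  ring_nf

lemma mul_setLIntegral_le_of_slices {α β : Type*} [MeasurableSpace α] [MeasurableSpace β]
    {μ : Measure α} {ν : Measure β} [SFinite μ] [SFinite ν] {A : Set α} {B : Set β}
    {E : Set (α × β)} (hA : MeasurableSet A) (hB : MeasurableSet B) (hE : MeasurableSet E)
    {Φ : α → ℝ≥0∞} {Ψ : α × β → ℝ≥0∞} (hΦ : Measurable Φ) (hΨ : Measurable Ψ) {c D : ℝ≥0∞}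
    (hc : ∀ x ∈ A, c ≤ ν (B ∩ {y | (x, y) ∈ E})) (hΦΨ : ∀ z ∈ E, Φ z.1 ≤ Ψ z)
    (hD : ∀ y ∈ B, ∫⁻ x in A ∩ {x | (x, y) ∈ E}, Ψ (x, y) ∂μ ≤ D) :
    c * ∫⁻ x in A, Φ x ∂μ ≤ ν B * D := by
  have hEx (x : α) : MeasurableSet {y | (x, y) ∈ E} := measurable_prodMk_left hE
  have hEy (y : β) : MeasurableSet {x | (x, y) ∈ E} := measurable_prodMk_right hE
  calc c * ∫⁻ x in A, Φ x ∂μ = ∫⁻ x in A, c * Φ x ∂μ := (lintegral_const_mul _ hΦ).symm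
    _ ≤ ∫⁻ x in A, ∫⁻ y in B, E.indicator Ψ (x, y) ∂ν ∂μ := by
        refine setLIntegral_mono' hA fun x hx => ?_
        calc c * Φ x ≤ ∫⁻ _ in B ∩ {y | (x, y) ∈ E}, Φ x ∂ν := by
              rw [setLIntegral_const, mul_comm]
              exact mul_le_mul_right (hc x hx) _
          _ ≤ ∫⁻ y in B ∩ {y | (x, y) ∈ E}, Ψ (x, y) ∂ν :=
              setLIntegral_mono' (hB.inter (hEx x)) fun y hy => hΦΨ (x, y) hy.2
          _ = ∫⁻ y in B, E.indicator Ψ (x, y) ∂ν := by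
              rw [Set.inter_comm, ← setLIntegral_indicator (hEx x)]; rfl
    _ = ∫⁻ y in B, ∫⁻ x in A, E.indicator Ψ (x, y) ∂μ ∂ν :=
        lintegral_lintegral_swap (hΨ.indicator hE).aemeasurable
    _ ≤ ∫⁻ _ in B, D ∂ν := by
        refine setLIntegral_mono' hB fun y hy => le_trans (le_of_eq ?_) (hD y hy)
        rw [Set.inter_comm, ← setLIntegral_indicator (hEy y)]; rfl
    _ = ν B * D := by rw [setLIntegral_const, mul_comm]

lemma enorm_rpow_le_two_rpow_mul {q : ℝ} (hq : 1 ≤ q) (a b : ℝ) :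
    ‖a‖ₑ ^ q ≤ 2 ^ (q - 1) * (‖b‖ₑ ^ q + ‖b - a‖ₑ ^ q) := by
  have htriangle : ‖a‖ₑ ≤ ‖b‖ₑ + ‖b - a‖ₑ := by simpa using enorm_sub_le (a := b) (b := b - a)
  exact (ENNReal.rpow_le_rpow htriangle (by positivity)).trans
    (ENNReal.rpow_add_le_mul_rpow_add_rpow _ _ hq)

/-- The spherical shell `{a ≤ d < b}` of the Carnot–Carathéodory norm `d`, for dyadic
decompositions. -/
def shell (a b : ℝ) : Set Heis := ccNorm ⁻¹' Set.Ico a b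

lemma measurableSet_shell (a b : ℝ) : MeasurableSet (shell a b) :=
  measurable_ccNorm measurableSet_Ico

lemma Hmul_mem_shell {t s : ℝ} (hs : 0 < s) (hst : 20 * s ≤ t) {x k : Heis}
    (hx : x ∈ shell t (2 * t)) (hk : k ∈ hbox s) : Hmul x k ∈ shell (t / 2) (4 * t) := by
  have hle := ccNorm_Hmul_le hs hk x
  have hge := ccNorm_le_Hmul_add hs hk x
  exact ⟨by linarith [hx.1], by linarith [hx.2]⟩

lemma volume_hbox_le_volume_descent {r : ℝ} (hr : 0 < r) {x : Heis} (hx : r < ccNorm x) :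
    volume (hbox (r / 40)) ≤
      volume (hbox (2 * r) ∩ {h | ccNorm (Hmul x h) ≤ ccNorm x - r / 2}) := by
  obtain ⟨g, hg, hgd⟩ := exists_mem_hbox_ccNorm_Hmul_le hr hx (δ := 3 / 4 * r) (by linarith)
  rw [← (measurePreserving_Hmul_left (-g)).measure_preimage
    (measurableSet_hbox _).nullMeasurableSet]
  refine measure_mono fun h hh => ?_
  rw [← Hmul_neg_cancel_left g h]
  refine ⟨hbox_mono (by positivity) (by linarith) (Hmul_mem_hbox hg hh), ?_⟩
  have hle := ccNorm_Hmul_le (by positivity) hh (Hmul x g)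
  rw [Set.mem_ofPred_eq, ← Hmul_assoc]
  linarith

section ShellEstimate

variable {p q β : ℝ}

lemma translationBound_muP_descent (hp : 1 < p) (hβ : 0 ≤ β) {r t : ℝ} (hr : 0 < r)
    (hrt : 40 * r ≤ t) {h : Heis} (hh : h ∈ hbox (2 * r)) :
    TranslationBound (muP p β) (shell t (2 * t) ∩ {x | ccNorm (Hmul x h) ≤ ccNorm x - r / 2})
      (shell (t / 2) (4 * t)) {h}
      (ENNReal.ofReal (Real.exp (β * -(p * (t / 2) ^ (p - 1) * (r / 2))))) := by
  refine translationBound_muP hβ ((measurableSet_shell _ _).inter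
    (measurableSet_le (by fun_prop) (by fun_prop))) (measurableSet_shell _ _) ?_
  rintro x ⟨hx, hdesc⟩ k rfl
  have hmem := Hmul_mem_shell (by positivity) (by linarith) hx hh
  have ht : 0 < t := by linarith
  have htangent := rpow_sub_rpow_le hp (ccNorm_nonneg (Hmul x k)) (ccNorm_nonneg x)
  have hgain : p * (t / 2) ^ (p - 1) * (r / 2) ≤
      p * ccNorm (Hmul x k) ^ (p - 1) * (ccNorm x - ccNorm (Hmul x k)) := by
    have hd : t / 2 ≤ ccNorm (Hmul x k) := hmem.1
    have hdec : ccNorm (Hmul x k) ≤ ccNorm x - r / 2 := hdesc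
    have hpow : 0 ≤ ccNorm (Hmul x k) ^ (p - 1) := Real.rpow_nonneg (ccNorm_nonneg _) _
    gcongr
    linarith
  exact ⟨hmem, by linarith⟩

lemma translationBound_muP_shell (hp : 1 < p) (hβ : 0 ≤ β) {r t : ℝ} (hr : 0 < r)
    (hrt : 200 * r ≤ t) :
    TranslationBound (muP p β) (shell t (2 * t)) (shell (t / 2) (4 * t)) (hbox (5 * (2 * r)))
      (ENNReal.ofReal (Real.exp (β * (p * (4 * t) ^ (p - 1) * (100 * r))))) := by
  rw [show 100 * r = 10 * (5 * (2 * r)) by ring]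
  exact translationBound_muP_hbox hp hβ (measurableSet_shell _ _) (measurableSet_shell _ _)
    (by positivity) (fun x hx k => Hmul_mem_shell (by positivity) (by linarith) hx)
    fun x hx => by linarith [hx.2]

lemma lintegral_shell_le (hp : 1 < p) (hq : 1 ≤ q) (hβ : 0 < β) {r t : ℝ} (hr : 0 < r)
    (hrt : 200 * r ≤ t) {f : Heis → ℝ} (hf : ContDiff ℝ 1 f) :
    ∫⁻ x in shell t (2 * t), ‖f x‖ₑ ^ q ∂muP p β ≤ ENNReal.ofReal (80 ^ 4) * (2 ^ (q - 1) *
      (ENNReal.ofReal (Real.exp (β * -(p * (t / 2) ^ (p - 1) * (r / 2)))) *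
          ∫⁻ x in shell (t / 2) (4 * t), ‖f x‖ₑ ^ q ∂muP p β +
        ENNReal.ofReal (20 * r) ^ q *
          ENNReal.ofReal (Real.exp (β * (p * (4 * t) ^ (p - 1) * (100 * r)))) *
          ∫⁻ x in shell (t / 2) (4 * t), ‖gradLen f x‖ₑ ^ q ∂muP p β)) := by
  have := isProbabilityMeasure_muP hp.le hβ
  have hfm := hf.continuous.measurable
  have hE : MeasurableSet {z : Heis × Heis | ccNorm (Hmul z.1 z.2) ≤ ccNorm z.1 - r / 2} :=
    measurableSet_le (by fun_prop) (by fun_prop)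
  set F := ∫⁻ x in shell (t / 2) (4 * t), ‖f x‖ₑ ^ q ∂muP p β
  set G := ∫⁻ x in shell (t / 2) (4 * t), ‖gradLen f x‖ₑ ^ q ∂muP p β
  have htrans := translationBound_muP_shell hp hβ.le hr hrt
  have hslice (h : Heis) (hh : h ∈ hbox (2 * r)) :
      ∫⁻ x in shell t (2 * t) ∩ {x | ccNorm (Hmul x h) ≤ ccNorm x - r / 2},
        2 ^ (q - 1) * (‖f (Hmul x h)‖ₑ ^ q + ‖f (Hmul x h) - f x‖ₑ ^ q) ∂muP p β ≤
      2 ^ (q - 1) * (ENNReal.ofReal (Real.exp (β * -(p * (t / 2) ^ (p - 1) * (r / 2)))) * F +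
        ENNReal.ofReal (20 * r) ^ q *
          ENNReal.ofReal (Real.exp (β * (p * (4 * t) ^ (p - 1) * (100 * r)))) * G) := by
    rw [lintegral_const_mul _ (by fun_prop), lintegral_add_left (by fun_prop),
      show 20 * r = 10 * (2 * r) by ring]
    exact mul_le_mul_right (add_le_add
      ((translationBound_muP_descent hp hβ.le hr (by linarith) hh).lintegral_comp_le rfl
        (by fun_prop))
      ((lintegral_mono_set Set.inter_subset_left).trans
        (htrans.lintegral_Hmul_sub_le hq hf (by positivity) hh))) _
  have havg := mul_setLIntegral_le_of_slices (Φ := fun x => ‖f x‖ₑ ^ q)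
    (Ψ := fun z => 2 ^ (q - 1) * (‖f (Hmul z.1 z.2)‖ₑ ^ q + ‖f (Hmul z.1 z.2) - f z.1‖ₑ ^ q))
    (measurableSet_shell t (2 * t)) (measurableSet_hbox (2 * r)) hE (by fun_prop) (by fun_prop)
    (fun x hx => volume_hbox_le_volume_descent hr (by linarith [hx.1]))
    (fun z _ => enorm_rpow_le_two_rpow_mul hq _ _) hslice
  rw [show 2 * r = 80 * (r / 40) by ring, volume_hbox_mul (by norm_num) (by positivity),
    mul_comm (ENNReal.ofReal (80 ^ 4)), mul_assoc, ENNReal.mul_le_mul_iff_right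
      (volume_hbox_ne_zero (by positivity)) (volume_hbox_ne_top _)] at havg
  exact havg

lemma lintegral_shell_scale_le (hpq : p.HolderConjugate q) (hβ : 0 < β) {M t : ℝ} (hM : 0 < M)
    (ht1 : 1 ≤ t) (hMt : 200 * M ≤ t) {f : Heis → ℝ} (hf : ContDiff ℝ 1 f) :
    ∫⁻ x in shell t (2 * t), ‖f x‖ₑ ^ q ∂muP p β ≤ ENNReal.ofReal (80 ^ 4) * (2 ^ (q - 1) *
      (ENNReal.ofReal (Real.exp (β * -(p * 2 ^ (-p) * M))) *
          ∫⁻ x in shell (t / 2) (4 * t), ‖f x‖ₑ ^ q ∂muP p β +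
        ENNReal.ofReal ((20 * M) ^ q * t ^ (-p)) *
          ENNReal.ofReal (Real.exp (β * (p * 4 ^ (p - 1) * (100 * M)))) *
          ∫⁻ x in shell (t / 2) (4 * t), ‖gradLen f x‖ₑ ^ q ∂muP p β)) := by
  have hp := hpq.lt
  have ht0 : 0 < t := by linarith
  have hcancel : t ^ (p - 1) * t ^ (1 - p) = 1 := by rw [← Real.rpow_add ht0]; simp
  have hrt : 200 * (M * t ^ (1 - p)) ≤ t := by
    have hpow : t ^ (1 - p) ≤ 1 := Real.rpow_le_one_of_one_le_of_nonpos ht1 (by linarith)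
    nlinarith
  have hgain : p * (t / 2) ^ (p - 1) * (M * t ^ (1 - p) / 2) = p * 2 ^ (-p) * M := by
    have hhalf : (2 : ℝ) ^ (-p) = (2 ^ (p - 1))⁻¹ / 2 := by
      rw [Real.rpow_neg (by norm_num), Real.rpow_sub_one (by norm_num)]
      field_simp
    rw [hhalf, Real.div_rpow ht0.le (by norm_num), div_eq_mul_inv]
    linear_combination p * (2 ^ (p - 1))⁻¹ * M / 2 * hcancel
  have hcost : p * (4 * t) ^ (p - 1) * (100 * (M * t ^ (1 - p))) =
      p * 4 ^ (p - 1) * (100 * M) := by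
    rw [Real.mul_rpow (by norm_num) ht0.le]
    linear_combination (100 * p * 4 ^ (p - 1) * M) * hcancel
  have hpow : (20 * (M * t ^ (1 - p))) ^ q = (20 * M) ^ q * t ^ (-p) := by
    rw [← mul_assoc, Real.mul_rpow (by positivity) (by positivity), ← Real.rpow_mul ht0.le]
    congr 2
    linear_combination -hpq.sub_one_mul_conj
  have hshell := lintegral_shell_le hp hpq.symm.lt.le hβ (by positivity) hrt hf
  rwa [hgain, hcost, ENNReal.ofReal_rpow_of_pos (by positivity), hpow] at hshell

lemma exists_pos_mul_exp_neg_mul_le {a b η : ℝ} (hb : 0 < b) (hη : 0 < η) :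
    ∃ M > 0, a * Real.exp (-(b * M)) ≤ η := by
  have hlim : Tendsto (fun M => a * Real.exp (-(b * M))) atTop (𝓝 (a * 0)) :=
    (Real.tendsto_exp_neg_atTop_nhds_zero.comp (tendsto_id.const_mul_atTop hb)).const_mul a
  rw [mul_zero] at hlim
  exact ((eventually_gt_atTop 0).and (hlim.eventually_le_const hη)).exists

lemma exists_lintegral_shell_le (hpq : p.HolderConjugate q) (hβ : 0 < β) {η : ℝ} (hη : 0 < η) :
    ∃ A > 0, ∃ T₀ ≥ 1, ∀ t ≥ T₀, ∀ f : Heis → ℝ, ContDiff ℝ 1 f →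
      ∫⁻ x in shell t (2 * t), ‖f x‖ₑ ^ q ∂muP p β ≤
        ENNReal.ofReal (A * t ^ (-p)) *
            ∫⁻ x in shell (t / 2) (4 * t), ‖gradLen f x‖ₑ ^ q ∂muP p β +
          ENNReal.ofReal η * ∫⁻ x in shell (t / 2) (4 * t), ‖f x‖ₑ ^ q ∂muP p β := by
  have hp0 := hpq.pos
  obtain ⟨M, hM, hMη⟩ := exists_pos_mul_exp_neg_mul_le (a := 80 ^ 4 * 2 ^ (q - 1))
    (b := β * (p * 2 ^ (-p))) (by positivity) hη
  refine ⟨80 ^ 4 * 2 ^ (q - 1) * (20 * M) ^ q * Real.exp (β * (p * 4 ^ (p - 1) * (100 * M))),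
    by positivity, max 1 (200 * M), le_max_left _ _, fun t ht f hf => ?_⟩
  have ht1 : 1 ≤ t := (le_max_left _ _).trans ht
  refine (lintegral_shell_scale_le hpq hβ hM ht1 ((le_max_right _ _).trans ht) hf).trans ?_
  have htwo : (2 : ℝ≥0∞) ^ (q - 1) = ENNReal.ofReal (2 ^ (q - 1)) := by
    rw [← ENNReal.ofReal_rpow_of_pos (by norm_num), ENNReal.ofReal_ofNat]
  rw [htwo, add_comm, mul_add, mul_add]
  simp only [← mul_assoc]
  iterate 4 rw [← ENNReal.ofReal_mul (by positivity)]
  gcongr ?_ * _ + ?_ * _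
  · exact ENNReal.ofReal_le_ofReal (by ring_nf; rfl)
  · exact ENNReal.ofReal_le_ofReal (by convert hMη using 3; ring)

end ShellEstimate

/-- The complement `{T ≤ d}` of the open ball of radius `T` about the identity, for the
Carnot–Carathéodory norm `d`. -/
def tail (T : ℝ) : Set Heis := ccNorm ⁻¹' Set.Ici T

lemma measurableSet_tail (T : ℝ) : MeasurableSet (tail T) := measurable_ccNorm measurableSet_Ici

lemma tail_anti : Antitone tail := fun _ _ h => Set.preimage_mono (Set.Ici_subset_Ici.2 h)

section Dyadic

variable {T : ℝ} (hT : 0 < T) (μ : Measure Heis) (φ : Heis → ℝ≥0∞)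

include hT

lemma tsum_setLIntegral_shell :
    ∑' j : ℕ, ∫⁻ x in shell (2 ^ j * T) (2 ^ (j + 1) * T), φ x ∂μ = ∫⁻ x in tail T, φ x ∂μ := by
  have hmono : Monotone fun j : ℕ => 2 ^ j * T := fun i j hij => by
    dsimp only
    gcongr
    norm_num
  have hunbdd : ¬BddAbove (Set.range fun j : ℕ => 2 ^ j * T) :=
    not_bddAbove_of_tendsto_atTop
      ((tendsto_pow_atTop_atTop_of_one_lt one_lt_two).atTop_mul_const hT)
  have hunion : ⋃ j : ℕ, shell (2 ^ j * T) (2 ^ (j + 1) * T) = tail T := by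
    simpa [shell, tail, ← Set.preimage_iUnion] using
      congr_arg (ccNorm ⁻¹' ·) (iUnion_Ico_map_succ_eq_Ici (fun j => hmono (Nat.zero_le j)) hunbdd)
  have hdisj : Pairwise (Function.onFun Disjoint fun j : ℕ =>
      shell (2 ^ j * T) (2 ^ (j + 1) * T)) :=
    fun i j hij => (hmono.pairwise_disjoint_on_Ico_succ hij).preimage ccNorm
  rw [← hunion, lintegral_iUnion (fun j => measurableSet_shell _ _) hdisj]

lemma tsum_setLIntegral_enlarged_shell_le :
    ∑' j : ℕ, ∫⁻ x in shell (2 ^ j * T / 2) (4 * (2 ^ j * T)), φ x ∂μ ≤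
      3 * ∫⁻ x in tail (T / 2), φ x ∂μ := by
  have hcover (j : ℕ) : shell (2 ^ j * T / 2) (4 * (2 ^ j * T)) ⊆
      shell (2 ^ j * (T / 2)) (2 ^ (j + 1) * (T / 2)) ∪ shell (2 ^ j * T) (2 ^ (j + 1) * T) ∪
        shell (2 ^ j * (2 * T)) (2 ^ (j + 1) * (2 * T)) := by
    rintro x ⟨hlo, hhi⟩
    rcases lt_or_ge (ccNorm x) (2 ^ j * T) with h | h
    · exact .inl (.inl ⟨by linarith, by rw [pow_succ]; linarith⟩)
    rcases lt_or_ge (ccNorm x) (2 ^ (j + 1) * T) with h' | h'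
    · exact .inl (.inr ⟨h, h'⟩)
    · rw [pow_succ] at h'
      exact .inr ⟨by linarith, by rw [pow_succ]; linarith⟩
  calc ∑' j : ℕ, ∫⁻ x in shell (2 ^ j * T / 2) (4 * (2 ^ j * T)), φ x ∂μ
      ≤ ∑' j : ℕ, ((∫⁻ x in shell (2 ^ j * (T / 2)) (2 ^ (j + 1) * (T / 2)), φ x ∂μ) +
          (∫⁻ x in shell (2 ^ j * T) (2 ^ (j + 1) * T), φ x ∂μ) +
          ∫⁻ x in shell (2 ^ j * (2 * T)) (2 ^ (j + 1) * (2 * T)), φ x ∂μ) :=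
        ENNReal.tsum_le_tsum fun j => (lintegral_mono_set (hcover j)).trans
          ((lintegral_union_le _ _ _).trans (add_le_add_left (lintegral_union_le _ _ _) _))
    _ = (∫⁻ x in tail (T / 2), φ x ∂μ) + (∫⁻ x in tail T, φ x ∂μ) +
          ∫⁻ x in tail (2 * T), φ x ∂μ := by
        rw [ENNReal.tsum_add, ENNReal.tsum_add, tsum_setLIntegral_shell (by positivity),
          tsum_setLIntegral_shell hT, tsum_setLIntegral_shell (by positivity)]
    _ ≤ (∫⁻ x in tail (T / 2), φ x ∂μ) + (∫⁻ x in tail (T / 2), φ x ∂μ) +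
          ∫⁻ x in tail (T / 2), φ x ∂μ := by
        gcongr <;> exact tail_anti (by linarith)
    _ = 3 * ∫⁻ x in tail (T / 2), φ x ∂μ := by ring

end Dyadic

lemma le_rpow_neg_mul_of_le_half {φ : ℝ → ℝ≥0∞} {H : ℝ≥0∞} {A T₀ p : ℝ} (hp : 0 ≤ p)
    (hA : 0 ≤ A) (hT₀ : 0 < T₀) (hφH : ∀ T, φ T ≤ H)
    (hφ : ∀ T ≥ T₀, φ T ≤
      ENNReal.ofReal (A * T ^ (-p)) * H + ENNReal.ofReal (2 ^ (-p) / 2) * φ (T / 2))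
    {T : ℝ} (hT : 0 < T) : φ T ≤ ENNReal.ofReal ((T₀ ^ p + 2 * A) * T ^ (-p)) * H := by
  set K := T₀ ^ p + 2 * A with hK
  have hbase (T : ℝ) (hT : 0 < T) (hTT₀ : T ≤ T₀) : φ T ≤ ENNReal.ofReal (K * T ^ (-p)) * H := by
    have hK1 : 1 ≤ K * T ^ (-p) := by
      rw [Real.rpow_neg hT.le, ← div_eq_mul_inv, le_div_iff₀ (by positivity), one_mul]
      linarith [Real.rpow_le_rpow hT.le hTT₀ hp]
    calc φ T ≤ 1 * H := by rw [one_mul]; exact hφH T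
      _ ≤ _ := by gcongr; exact ENNReal.one_le_ofReal.2 hK1
  obtain ⟨n, hn⟩ := pow_unbounded_of_one_lt (T / T₀) one_lt_two
  rw [div_lt_iff₀ hT₀] at hn
  induction n generalizing T with
  | zero => exact hbase T hT (by simpa using hn.le)
  | succ n ih =>
    rcases le_total T T₀ with hTT₀ | hTT₀
    · exact hbase T hT hTT₀
    have hhalf : 2 ^ (-p) / 2 * (K * (T / 2) ^ (-p)) = K / 2 * T ^ (-p) := by
      rw [Real.div_rpow hT.le (by norm_num)]
      field_simp
    calc φ T ≤ ENNReal.ofReal (A * T ^ (-p)) * H +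
          ENNReal.ofReal (2 ^ (-p) / 2) * (ENNReal.ofReal (K * (T / 2) ^ (-p)) * H) := by
          refine (hφ T hTT₀).trans ?_
          gcongr
          exact ih (by positivity) (by rw [pow_succ] at hn; linarith)
      _ = ENNReal.ofReal ((A + K / 2) * T ^ (-p)) * H := by
          rw [← mul_assoc, ← ENNReal.ofReal_mul (by positivity), hhalf, ← add_mul,
            ← ENNReal.ofReal_add (by positivity) (by positivity), add_mul]
      _ ≤ ENNReal.ofReal (K * T ^ (-p)) * H := by
          gcongr
          rw [hK]
          linarith [Real.rpow_nonneg hT₀.le p]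

section TailEstimate

variable {p q β : ℝ}

lemma exists_lintegral_tail_le_add (hpq : p.HolderConjugate q) (hβ : 0 < β) {η : ℝ} (hη : 0 < η) :
    ∃ A > 0, ∃ T₀ ≥ 1, ∀ T ≥ T₀, ∀ f : Heis → ℝ, ContDiff ℝ 1 f →
      ∫⁻ x in tail T, ‖f x‖ₑ ^ q ∂muP p β ≤
        ENNReal.ofReal (A * T ^ (-p)) * ∫⁻ x, ‖gradLen f x‖ₑ ^ q ∂muP p β +
          ENNReal.ofReal η * ∫⁻ x in tail (T / 2), ‖f x‖ₑ ^ q ∂muP p β := by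
  obtain ⟨A, hA, T₀, hT₀, hshell⟩ := exists_lintegral_shell_le hpq hβ (η := η / 3) (by positivity)
  refine ⟨3 * A, by positivity, T₀, hT₀, fun T hT f hf => ?_⟩
  have hT0 : 0 < T := by linarith
  calc ∫⁻ x in tail T, ‖f x‖ₑ ^ q ∂muP p β
      = ∑' j : ℕ, ∫⁻ x in shell (2 ^ j * T) (2 ^ (j + 1) * T), ‖f x‖ₑ ^ q ∂muP p β :=
        (tsum_setLIntegral_shell hT0 _ _).symm
    _ ≤ ∑' j : ℕ, (ENNReal.ofReal (A * T ^ (-p)) *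
            (∫⁻ x in shell (2 ^ j * T / 2) (4 * (2 ^ j * T)), ‖gradLen f x‖ₑ ^ q ∂muP p β) +
          ENNReal.ofReal (η / 3) *
            ∫⁻ x in shell (2 ^ j * T / 2) (4 * (2 ^ j * T)), ‖f x‖ₑ ^ q ∂muP p β) := by
        refine ENNReal.tsum_le_tsum fun j => ?_
        have hTj : T ≤ 2 ^ j * T := le_mul_of_one_le_left hT0.le (one_le_pow₀ one_le_two)
        rw [pow_succ', mul_assoc]
        refine (hshell _ (hT.trans hTj) f hf).trans ?_
        gcongr ENNReal.ofReal (A * ?_) * _ + _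
        exact Real.rpow_le_rpow_of_nonpos hT0 hTj (neg_nonpos.2 hpq.pos.le)
    _ ≤ ENNReal.ofReal (A * T ^ (-p)) * (3 * ∫⁻ x, ‖gradLen f x‖ₑ ^ q ∂muP p β) +
          ENNReal.ofReal (η / 3) * (3 * ∫⁻ x in tail (T / 2), ‖f x‖ₑ ^ q ∂muP p β) := by
        rw [ENNReal.tsum_add, ENNReal.tsum_mul_left, ENNReal.tsum_mul_left]
        gcongr
        · exact (tsum_setLIntegral_enlarged_shell_le hT0 _ _).trans
            (mul_le_mul_right (setLIntegral_le_lintegral _ _) _)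
        · exact tsum_setLIntegral_enlarged_shell_le hT0 _ _
    _ = _ := by
        rw [← mul_assoc, ← mul_assoc, ← ENNReal.ofReal_ofNat, ← ENNReal.ofReal_mul (by positivity),
          ← ENNReal.ofReal_mul (by positivity)]
        ring_nf

/-- The `U`-bound of Hebisch and Zegarliński. -/
lemma exists_lintegral_tail_le (hpq : p.HolderConjugate q) (hβ : 0 < β) :
    ∃ K > 0, ∀ T > 0, ∀ f : Heis → ℝ, ContDiff ℝ 1 f →
      ∫⁻ x in tail T, ‖f x‖ₑ ^ q ∂muP p β ≤ ENNReal.ofReal (K * T ^ (-p)) *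
        (∫⁻ x, ‖gradLen f x‖ₑ ^ q ∂muP p β + ∫⁻ x, ‖f x‖ₑ ^ q ∂muP p β) := by
  have hp := hpq.pos
  obtain ⟨A, hA, T₀, hT₀, htail⟩ := exists_lintegral_tail_le_add hpq hβ
    (η := 2 ^ (-p) / 2) (by positivity)
  refine ⟨T₀ ^ p + 2 * A, by positivity, fun T hT f hf => ?_⟩
  refine le_rpow_neg_mul_of_le_half hp.le hA.le (by linarith)
    (φ := fun T => ∫⁻ x in tail T, ‖f x‖ₑ ^ q ∂muP p β)
    (fun T => (setLIntegral_le_lintegral _ _).trans le_add_self) (fun T hT => ?_) hT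
  exact (htail T hT f hf).trans (by gcongr; exact le_self_add)

end TailEstimate

/-! ### The Poincaré inequality -/

lemma gradLen_sub_const (f : Heis → ℝ) (a : ℝ) : gradLen (fun x => f x - a) = gradLen f := by
  ext x
  simp [gradLen, X1, X2, fderiv_sub_const]

lemma gradLen_comp {φ : ℝ → ℝ} {φ' : ℝ} {f : Heis → ℝ} {x : Heis} (hφ : HasDerivAt φ φ' (f x))
    (hf : DifferentiableAt ℝ f x) : gradLen (fun y => φ (f y)) x = |φ'| * gradLen f x := by
  have hchain : fderiv ℝ (fun y => φ (f y)) x = φ' • fderiv ℝ f x :=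
    (hφ.comp_hasFDerivAt x hf.hasFDerivAt).fderiv
  rw [gradLen, gradLen, ← Real.sqrt_sq_eq_abs, ← Real.sqrt_mul (sq_nonneg _)]
  simp only [X1, X2, hchain, smul_apply, smul_eq_mul]
  ring_nf

section LocalPoincare

variable {μ : Measure Heis} [SFinite μ] {S q : ℝ} {K : ℝ≥0∞} {f : Heis → ℝ}

lemma lintegral_lintegral_hbox_sub_le (hS : 0 < S)
    (hμ : TranslationBound μ (hbox S) Set.univ (hbox (5 * (2 * S))) K) (hq : 1 ≤ q)
    (hf : ContDiff ℝ 1 f) :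
    ∫⁻ y in hbox S, ∫⁻ x in hbox S, ‖f x - f y‖ₑ ^ q ∂μ ≤
      ENNReal.ofReal (2 ^ 4) * volume (hbox S) *
        (ENNReal.ofReal (10 * (2 * S)) ^ q * K * ∫⁻ x, ‖gradLen f x‖ₑ ^ q ∂μ) := by
  have hfm := hf.continuous.measurable
  set D := ENNReal.ofReal (10 * (2 * S)) ^ q * K * ∫⁻ x, ‖gradLen f x‖ₑ ^ q ∂μ
  have hcenter (x : Heis) (hx : x ∈ hbox S) : ∫⁻ y in hbox S, ‖f x - f y‖ₑ ^ q ≤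
      ∫⁻ h in hbox (2 * S), ‖f (Hmul x h) - f x‖ₑ ^ q := by
    rw [← (measurePreserving_Hmul_left x).setLIntegral_comp_preimage (measurableSet_hbox S)
      (by fun_prop)]
    simp only [enorm_sub_rev (f x)]
    refine lintegral_mono_set fun h hh => ?_
    rw [← neg_Hmul_cancel_left x h, two_mul]
    exact Hmul_mem_hbox (neg_mem_hbox hx) hh
  calc ∫⁻ y in hbox S, ∫⁻ x in hbox S, ‖f x - f y‖ₑ ^ q ∂μ
      = ∫⁻ x in hbox S, ∫⁻ y in hbox S, ‖f x - f y‖ₑ ^ q ∂volume ∂μ :=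
        lintegral_lintegral_swap (by fun_prop)
    _ ≤ ∫⁻ x in hbox S, ∫⁻ h in hbox (2 * S), ‖f (Hmul x h) - f x‖ₑ ^ q ∂volume ∂μ :=
        setLIntegral_mono' (measurableSet_hbox S) hcenter
    _ = ∫⁻ h in hbox (2 * S), ∫⁻ x in hbox S, ‖f (Hmul x h) - f x‖ₑ ^ q ∂μ :=
        lintegral_lintegral_swap (by fun_prop)
    _ ≤ ∫⁻ _ in hbox (2 * S), D := by
        refine setLIntegral_mono' (measurableSet_hbox _) fun h hh => ?_
        simpa only [Measure.restrict_univ] using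
          hμ.lintegral_Hmul_sub_le hq hf (by positivity) hh
    _ = ENNReal.ofReal (2 ^ 4) * volume (hbox S) * D := by
        rw [setLIntegral_const, volume_hbox_mul zero_le_two hS.le, mul_comm]

lemma exists_lintegral_hbox_sub_le (hS : 0 < S)
    (hμ : TranslationBound μ (hbox S) Set.univ (hbox (5 * (2 * S))) K) (hq : 1 ≤ q)
    (hf : ContDiff ℝ 1 f) :
    ∃ y, ∫⁻ x in hbox S, ‖f x - f y‖ₑ ^ q ∂μ ≤
      ENNReal.ofReal (2 ^ 4) *
        (ENNReal.ofReal (10 * (2 * S)) ^ q * K * ∫⁻ x, ‖gradLen f x‖ₑ ^ q ∂μ) := by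
  have hfm := hf.continuous.measurable
  have hmeas : Measurable fun z : Heis × Heis => ‖f z.1 - f z.2‖ₑ ^ q := by fun_prop
  obtain ⟨y, -, hy⟩ := exists_le_setLAverage (volume_hbox_ne_zero hS) (volume_hbox_ne_top S)
    (hmeas.lintegral_prod_left' (μ := μ.restrict (hbox S))).aemeasurable
  refine ⟨y, hy.trans ?_⟩
  rw [setLAverage_eq]
  refine ENNReal.div_le_of_le_mul ((lintegral_lintegral_hbox_sub_le hS hμ hq hf).trans_eq ?_)
  ring

end LocalPoincare

lemma le_two_mul_of_le_add_half {a b : ℝ≥0∞} (hb : b ≠ ∞) (h : b ≤ a + b / 2) :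
    b ≤ 2 * a := by
  have hhalf : b / 2 + b / 2 ≤ a + b / 2 := by rwa [ENNReal.add_halves]
  have hle := ENNReal.le_of_add_le_add_right (ENNReal.div_ne_top hb two_ne_zero) hhalf
  calc b = b / 2 + b / 2 := (ENNReal.add_halves b).symm
    _ ≤ 2 * a := by rw [two_mul]; gcongr

lemma lintegral_le_of_tendsto {α : Type*} [MeasurableSpace α] {μ : Measure α}
    {φ : ℕ → α → ℝ≥0∞} {ψ : α → ℝ≥0∞} {C : ℝ≥0∞} (hφ : ∀ n, Measurable (φ n))
    (hlim : ∀ x, Tendsto (φ · x) atTop (𝓝 (ψ x))) (hC : ∀ n, ∫⁻ x, φ n x ∂μ ≤ C) :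
    ∫⁻ x, ψ x ∂μ ≤ C :=
  calc ∫⁻ x, ψ x ∂μ = ∫⁻ x, liminf (φ · x) atTop ∂μ :=
        lintegral_congr fun x => (hlim x).liminf_eq.symm
    _ ≤ liminf (fun n => ∫⁻ x, φ n x ∂μ) atTop := lintegral_liminf_le hφ
    _ ≤ C := liminf_le_of_le (by isBoundedDefault) fun _ hb =>
        hb.exists.elim fun n h => h.trans (hC n)

section Truncation

variable {c : ℝ}

lemma hasDerivAt_mul_sin_div (hc : c ≠ 0) (u : ℝ) :
    HasDerivAt (fun u => c * Real.sin (u / c)) (Real.cos (u / c)) u :=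
  (((hasDerivAt_id u).div_const c).sin.const_mul c).congr_deriv (by simp only [id]; field_simp)

lemma abs_mul_sin_div_le_abs (hc : 0 < c) (u : ℝ) : |c * Real.sin (u / c)| ≤ |u| := by
  calc |c * Real.sin (u / c)| ≤ c * |u / c| := by
        rw [abs_mul, abs_of_pos hc]
        exact mul_le_mul_of_nonneg_left Real.abs_sin_le_abs hc.le
    _ = |u| := by rw [abs_div, abs_of_pos hc]; field_simp

lemma tendsto_mul_sin_div (u : ℝ) :
    Tendsto (fun n : ℕ => ((n : ℝ) + 1) * Real.sin (u / (n + 1))) atTop (𝓝 u) := by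
  have hn : Tendsto (fun n : ℕ => (n : ℝ) + 1) atTop atTop :=
    tendsto_atTop_add_const_right _ _ tendsto_natCast_atTop_atTop
  simpa [div_eq_inv_mul, Function.comp_def] using
    ((Real.hasDerivAt_sin 0).hasFDerivAt.lim_real u).comp hn

lemma enorm_gradLen_mul_sin_div_le (hc : 0 < c) {f : Heis → ℝ} {x : Heis}
    (hf : DifferentiableAt ℝ f x) :
    ‖gradLen (fun y => c * Real.sin (f y / c)) x‖ₑ ≤ ‖gradLen f x‖ₑ := by
  rw [gradLen_comp (hasDerivAt_mul_sin_div hc.ne' (f x)) hf, enorm_mul]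
  refine mul_le_of_le_one_left' ?_
  rw [enorm_abs, Real.enorm_eq_ofReal_abs, ENNReal.ofReal_le_one]
  exact Real.abs_cos_le_one _

end Truncation

section Poincare

variable {p q β : ℝ}

lemma lintegral_le_add_hbox_of_ne_top {μ : Measure Heis} {T : ℝ} {φ : Heis → ℝ≥0∞} {G : ℝ≥0∞}
    (hφ : ∫⁻ x, φ x ∂μ ≠ ∞) (htail : ∫⁻ x in tail T, φ x ∂μ ≤ (G + ∫⁻ x, φ x ∂μ) / 2) :
    ∫⁻ x, φ x ∂μ ≤ G + 2 * ∫⁻ x in hbox T, φ x ∂μ := by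
  have hcompl : (tail T)ᶜ ⊆ hbox T := fun x hx => mem_hbox_of_ccNorm_lt (not_le.1 hx)
  have hsplit : ∫⁻ x, φ x ∂μ ≤
      (G / 2 + ∫⁻ x in hbox T, φ x ∂μ) + (∫⁻ x, φ x ∂μ) / 2 := by
    calc ∫⁻ x, φ x ∂μ = (∫⁻ x in tail T, φ x ∂μ) + ∫⁻ x in (tail T)ᶜ, φ x ∂μ :=
          (lintegral_add_compl _ (measurableSet_tail T)).symm
      _ ≤ (G + ∫⁻ x, φ x ∂μ) / 2 + ∫⁻ x in hbox T, φ x ∂μ :=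
          add_le_add htail (lintegral_mono_set hcompl)
      _ = _ := by rw [ENNReal.add_div]; ring
  refine (le_two_mul_of_le_add_half hφ hsplit).trans_eq ?_
  rw [mul_add, ENNReal.mul_div_cancel two_ne_zero (by simp)]

lemma exists_lintegral_le_add_hbox (hpq : p.HolderConjugate q) (hβ : 0 < β) :
    ∃ T > 0, ∀ f : Heis → ℝ, ContDiff ℝ 1 f → ∫⁻ x, ‖f x‖ₑ ^ q ∂muP p β ≤
      ∫⁻ x, ‖gradLen f x‖ₑ ^ q ∂muP p β + 2 * ∫⁻ x in hbox T, ‖f x‖ₑ ^ q ∂muP p β := by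
  have hp := hpq.pos
  have hq := hpq.symm.pos
  have := isProbabilityMeasure_muP hpq.lt.le hβ
  obtain ⟨K, hK, htail⟩ := exists_lintegral_tail_le hpq hβ
  have hT : K * ((2 * K) ^ p⁻¹) ^ (-p) = 1 / 2 := by
    rw [← Real.rpow_mul (by positivity), mul_neg, inv_mul_cancel₀ hp.ne', Real.rpow_neg_one]
    field_simp
  refine ⟨(2 * K) ^ p⁻¹, by positivity, fun f hf => ?_⟩
  have hfm := hf.continuous.measurable
  -- The bounded functions `n sin (f / n)` have a finite `q`-th moment, which the tail estimate can
  -- absorb.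
  refine lintegral_le_of_tendsto (φ := fun n x => ‖((n : ℝ) + 1) * Real.sin (f x / (n + 1))‖ₑ ^ q)
    (fun n => by fun_prop)
    (fun x => (tendsto_mul_sin_div (f x)).enorm.ennrpow_const q) fun n => ?_
  set g : Heis → ℝ := fun x => ((n : ℝ) + 1) * Real.sin (f x / (n + 1))
  have hg : ContDiff ℝ 1 g := by fun_prop
  have hgf (x : Heis) : ‖g x‖ₑ ≤ ‖f x‖ₑ :=
    enorm_le_iff_norm_le.2 (abs_mul_sin_div_le_abs (by positivity) _)
  have hgrad (x : Heis) : ‖gradLen g x‖ₑ ≤ ‖gradLen f x‖ₑ :=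
    enorm_gradLen_mul_sin_div_le (by positivity) (hf.differentiable (by simp) x)
  have hfin : ∫⁻ x, ‖g x‖ₑ ^ q ∂muP p β ≠ ∞ := by
    have hbound (x : Heis) : ‖g x‖ₑ ^ q ≤ ‖(n : ℝ) + 1‖ₑ ^ q := by
      gcongr
      rw [enorm_mul]
      refine mul_le_of_le_one_right' ?_
      rw [Real.enorm_eq_ofReal_abs, ENNReal.ofReal_le_one]
      exact Real.abs_sin_le_one _
    exact ne_top_of_le_ne_top (b := ‖(n : ℝ) + 1‖ₑ ^ q) (by finiteness)
      ((lintegral_mono hbound).trans_eq (by simp))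
  refine (lintegral_le_add_hbox_of_ne_top hfin (G := ∫⁻ x, ‖gradLen g x‖ₑ ^ q ∂muP p β) ?_).trans
    (by gcongr <;> apply_assumption)
  refine (htail _ (by positivity) g hg).trans_eq ?_
  rw [hT, one_div, ENNReal.ofReal_inv_of_pos two_pos, ENNReal.ofReal_ofNat,
    ENNReal.div_eq_inv_mul]

lemma exists_poincare_muP (hpq : p.HolderConjugate q) (hβ : 0 < β) :
    ∃ C : ℝ≥0, ∀ f : Heis → ℝ, ContDiff ℝ 1 f → ∃ a : ℝ,
      ∫⁻ x, ‖f x - a‖ₑ ^ q ∂muP p β ≤ C * ∫⁻ x, ‖gradLen f x‖ₑ ^ q ∂muP p β := by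
  have := isProbabilityMeasure_muP hpq.lt.le hβ
  obtain ⟨T, hT, hglobal⟩ := exists_lintegral_le_add_hbox hpq hβ
  have htrans := translationBound_muP_hbox hpq.lt hβ.le (measurableSet_hbox T) .univ
    (s := 5 * (2 * T)) (R := 110 * T) (by positivity) (fun _ _ _ _ => Set.mem_univ _)
    fun x hx => by linarith [ccNorm_le_of_mem_hbox hT hx]
  set K := ENNReal.ofReal (Real.exp _)
  have hC : 1 + 2 * (ENNReal.ofReal (2 ^ 4) * (ENNReal.ofReal (10 * (2 * T)) ^ q * K)) ≠ ∞ := by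
    have := hpq.symm.nonneg
    finiteness
  lift 1 + 2 * (ENNReal.ofReal (2 ^ 4) * (ENNReal.ofReal (10 * (2 * T)) ^ q * K)) to ℝ≥0 using hC
    with C hCeq
  refine ⟨C, fun f hf => ?_⟩
  obtain ⟨y, hy⟩ := exists_lintegral_hbox_sub_le hT htrans hpq.symm.lt.le hf
  refine ⟨f y, (hglobal _ (hf.sub contDiff_const)).trans ?_⟩
  rw [hCeq, gradLen_sub_const, add_mul, one_mul, mul_assoc, mul_assoc]
  gcongr

end Poincare

/-! ### The Faber–Krahn inequality -/

/-- A Faber–Krahn inequality for `μ`, in the logarithmic form dual to a log-Sobolev inequality: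
functions supported on a set of `μ`-measure at most `e ^ (-L)` have a `q`-spectral gap of order
`L`. The zeroth-order term on the right makes the inequality weak for bounded `L`. -/
def FaberKrahn (μ : Measure Heis) (q : ℝ) (C : ℝ≥0) : Prop :=
  ∀ L : ℝ, ∀ g : Heis → ℝ, ContDiff ℝ 1 g →
    μ (Function.support g) ≤ ENNReal.ofReal (Real.exp (-L)) →
    ENNReal.ofReal L * ∫⁻ x, ‖g x‖ₑ ^ q ∂μ ≤
      C * (∫⁻ x, ‖gradLen g x‖ₑ ^ q ∂μ + ∫⁻ x, ‖g x‖ₑ ^ q ∂μ)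

lemma half_measure_le_measure_inter_compl {α : Type*} [MeasurableSpace α] {ν : Measure α}
    {B S : Set α} (hS : MeasurableSet S) (hB : ν B ≠ ∞) (h : ν (B ∩ S) ≤ ν B / 2) :
    ν B / 2 ≤ ν (B ∩ Sᶜ) := by
  refine ENNReal.le_of_add_le_add_left (ENNReal.div_ne_top hB two_ne_zero) ?_
  calc ν B / 2 + ν B / 2 = ν (B ∩ S) + ν (B \ S) := by
        rw [ENNReal.add_halves, measure_inter_add_sdiff B hS]
    _ ≤ ν B / 2 + ν (B ∩ Sᶜ) := by gcongr; rfl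

lemma TranslationBound.lintegral_le_of_volume_support_le {μ : Measure Heis} [SFinite μ]
    {A A' : Set Heis} {K : ℝ≥0∞} {q r : ℝ} {g : Heis → ℝ}
    (hμ : TranslationBound μ A A' (hbox (5 * r)) K) (hA : MeasurableSet A) (hq : 1 ≤ q)
    (hr : 0 < r) (hg : ContDiff ℝ 1 g)
    (hsupp : ∀ x ∈ A, volume (hbox r ∩ {h | g (Hmul x h) ≠ 0}) ≤ volume (hbox r) / 2) :
    ∫⁻ x in A, ‖g x‖ₑ ^ q ∂μ ≤
      2 * (ENNReal.ofReal (10 * r) ^ q * K * ∫⁻ x in A', ‖gradLen g x‖ₑ ^ q ∂μ) := by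
  have hgm := hg.continuous.measurable
  have hV := volume_hbox_ne_zero hr
  have hV' := volume_hbox_ne_top r
  have hslices := mul_setLIntegral_le_of_slices (μ := μ) (ν := volume) (A := A) (B := hbox r)
    (E := {z | g (Hmul z.1 z.2) = 0}) (Φ := fun x => ‖g x‖ₑ ^ q)
    (Ψ := fun z => ‖g (Hmul z.1 z.2) - g z.1‖ₑ ^ q) (c := volume (hbox r) / 2) hA
    (measurableSet_hbox r) (measurableSet_eq_fun (by fun_prop) (by fun_prop)) (by fun_prop)
    (by fun_prop)
    (fun x hx => by
      simpa [Set.compl_def] using half_measure_le_measure_inter_compl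
        (measurableSet_eq_fun (by fun_prop) (by fun_prop)).compl hV' (hsupp x hx))
    (fun z (hz : g _ = 0) => by simp [hz])
    (fun h hh => (lintegral_mono_set Set.inter_subset_left).trans
      (hμ.lintegral_Hmul_sub_le hq hg hr hh))
  rw [ENNReal.div_eq_inv_mul, mul_comm 2⁻¹, mul_assoc,
    ENNReal.mul_le_mul_iff_right hV hV', ← ENNReal.div_eq_inv_mul,
    ENNReal.div_le_iff two_ne_zero (by simp)] at hslices
  rwa [mul_comm 2]

section MuP

variable {p q β : ℝ}

lemma volume_le_mul_muP (hp : 1 ≤ p) (hβ : 0 < β) {S : Set Heis} (hS : MeasurableSet S) {R : ℝ}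
    (hSR : ∀ x ∈ S, ccNorm x ≤ R) :
    volume S ≤ ENNReal.ofReal ((∫ y, Real.exp (-β * ccNorm y ^ p)) * Real.exp (β * R ^ p)) *
      muP p β S := by
  set Z := ∫ y : Heis, Real.exp (-β * ccNorm y ^ p)
  have hZ : 0 < Z := integral_exp_pos (integrable_exp_neg_ccNorm_rpow hp hβ)
  have hdensity : ENNReal.ofReal (Real.exp (-β * R ^ p) / Z) * volume S ≤ muP p β S := by
    rw [muP, withDensity_apply _ hS, ← setLIntegral_const]
    refine setLIntegral_mono' hS fun x hx => ENNReal.ofReal_le_ofReal ?_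
    have := Real.rpow_le_rpow (ccNorm_nonneg x) (hSR x hx) (by linarith : 0 ≤ p)
    exact div_le_div_of_nonneg_right (Real.exp_le_exp.2 (by nlinarith)) hZ.le
  calc volume S = ENNReal.ofReal (Z * Real.exp (β * R ^ p)) *
        (ENNReal.ofReal (Real.exp (-β * R ^ p) / Z) * volume S) := by
        rw [← mul_assoc, ← ENNReal.ofReal_mul (by positivity), mul_div_assoc', mul_assoc,
          ← Real.exp_add]
        simp [hZ.ne']
    _ ≤ _ := by gcongr

lemma volume_inter_compl_tail_le (hp : 1 ≤ p) (hβ : 0 < β) {R r : ℝ} (hr : 0 ≤ r)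
    (hRr : (∫ y, Real.exp (-β * ccNorm y ^ p)) * Real.exp (-(β * R ^ p)) ≤ 4 * r ^ 4)
    {S : Set Heis} (hS : MeasurableSet S)
    (hSR : muP p β S ≤ ENNReal.ofReal (Real.exp (-(2 * β * R ^ p)))) :
    volume (S ∩ (tail R)ᶜ) ≤ volume (hbox r) / 2 := by
  set Z := ∫ y : Heis, Real.exp (-β * ccNorm y ^ p)
  have : 0 ≤ Z := integral_nonneg fun _ => Real.exp_nonneg _
  calc volume (S ∩ (tail R)ᶜ)
      ≤ ENNReal.ofReal (Z * Real.exp (β * R ^ p)) * muP p β (S ∩ (tail R)ᶜ) :=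
        volume_le_mul_muP hp hβ (hS.inter (measurableSet_tail R).compl) fun x hx =>
          (not_le.1 hx.2 : ccNorm x < R).le
    _ ≤ ENNReal.ofReal (Z * Real.exp (β * R ^ p)) *
          ENNReal.ofReal (Real.exp (-(2 * β * R ^ p))) := by
        gcongr
        exact (measure_mono Set.inter_subset_left).trans hSR
    _ = ENNReal.ofReal (Z * Real.exp (-(β * R ^ p))) := by
        rw [← ENNReal.ofReal_mul (by positivity), mul_assoc, ← Real.exp_add]
        ring_nf
    _ ≤ ENNReal.ofReal (4 * r ^ 4) := ENNReal.ofReal_le_ofReal hRr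
    _ = volume (hbox r) / 2 := by
        rw [volume_hbox hr, ← ENNReal.ofReal_ofNat 2, ← ENNReal.ofReal_div_of_pos two_pos]
        ring_nf

lemma lintegral_compl_tail_le_of_volume_support_le (hpq : p.HolderConjugate q) (hβ : 0 < β)
    {T : ℝ} (hT : 1 ≤ T) {g : Heis → ℝ} (hg : ContDiff ℝ 1 g)
    (hsupp : volume (Function.support g ∩ (tail (2 * T))ᶜ) ≤
      volume (hbox (T ^ (1 - p) / 100)) / 2) :
    ∫⁻ x in (tail T)ᶜ, ‖g x‖ₑ ^ q ∂muP p β ≤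
      ENNReal.ofReal (2 * Real.exp (β * (p * 2 ^ (p - 1))) * T ^ (-p)) *
        ∫⁻ x, ‖gradLen g x‖ₑ ^ q ∂muP p β := by
  have hp := hpq.lt
  have hq := hpq.symm.pos
  have hgm := hg.continuous.measurable
  have := isProbabilityMeasure_muP hp.le hβ
  have hball (x : Heis) (hx : x ∈ (tail T)ᶜ) : ccNorm x < T := not_le.1 hx
  have hTp : T ^ (1 - p) ≤ 1 := Real.rpow_le_one_of_one_le_of_nonpos hT (by linarith)
  set r := T ^ (1 - p) / 100 with hr
  have hr0 : 0 < r := by positivity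
  have hμ := translationBound_muP_hbox (A := (tail T)ᶜ) (s := 5 * r) (R := 2 * T) hp hβ.le
    (measurableSet_tail T).compl .univ (by positivity) (fun _ _ _ _ => Set.mem_univ _)
    fun x hx => by linarith [hball x hx]
  refine (hμ.lintegral_le_of_volume_support_le (measurableSet_tail T).compl hpq.symm.lt.le hr0 hg
    fun x hx => ?_).trans ?_
  · refine le_trans ?_ hsupp
    rw [← (measurePreserving_Hmul_left x).measure_preimage (((measurableSet_support hgm).inter
      (measurableSet_tail _).compl).nullMeasurableSet)]
    refine measure_mono fun h hh => ⟨hh.2, (?_ : ¬2 * T ≤ _)⟩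
    linarith [hball x hx, ccNorm_Hmul_le hr0 hh.1 x]
  · have hexp : p * (2 * T) ^ (p - 1) * (10 * (5 * r)) ≤ p * 2 ^ (p - 1) := by
      have hTT : T ^ (p - 1) * T ^ (1 - p) = 1 := by
        rw [← Real.rpow_add (by positivity)]; simp
      rw [Real.mul_rpow zero_le_two (by positivity), hr]
      nlinarith [show 0 < p * 2 ^ (p - 1) by positivity]
    have hpow : (10 * r) ^ q ≤ T ^ (-p) := by
      rw [← hpq.sub_one_mul_conj, ← neg_mul, neg_sub, Real.rpow_mul (by positivity)]
      gcongr
      linarith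
    rw [Measure.restrict_univ, ← mul_assoc, ENNReal.ofReal_rpow_of_nonneg (by positivity) hq.le,
      ← ENNReal.ofReal_mul (by positivity), ← ENNReal.ofReal_ofNat,
      ← ENNReal.ofReal_mul zero_le_two, mul_assoc 2, mul_comm (Real.exp _)]
    gcongr

lemma eventually_mul_exp_neg_le (hp : 0 < p) (hβ : 0 < β) (Z : ℝ) :
    ∀ᶠ T in atTop, Z * Real.exp (-(β * (2 * T) ^ p)) ≤ 4 * (T ^ (1 - p) / 100) ^ 4 := by
  have hlim : Tendsto (fun T : ℝ => Z * ((T ^ p) ^ (4 * (p - 1) / p) *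
      Real.exp (-(β * 2 ^ p) * T ^ p))) atTop (𝓝 (Z * 0)) :=
    ((tendsto_rpow_mul_exp_neg_mul_atTop_nhds_zero _ _ (by positivity)).comp
      (tendsto_rpow_atTop hp)).const_mul Z
  rw [mul_zero] at hlim
  filter_upwards [hlim.eventually_le_const (show (0 : ℝ) < 4 / 100 ^ 4 by norm_num),
    eventually_gt_atTop 0] with T hle hT
  have hinv : T ^ (1 - p) = (T ^ (p - 1))⁻¹ := by rw [← Real.rpow_neg hT.le, neg_sub]
  rw [← Real.rpow_mul hT.le, mul_div_cancel₀ _ hp.ne', mul_comm 4,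
    Real.rpow_mul hT.le, Real.rpow_ofNat] at hle
  calc Z * Real.exp (-(β * (2 * T) ^ p))
      = Z * ((T ^ (p - 1)) ^ 4 * Real.exp (-(β * 2 ^ p) * T ^ p)) / (T ^ (p - 1)) ^ 4 := by
        rw [Real.mul_rpow zero_le_two hT.le]
        field_simp
    _ ≤ 4 / 100 ^ 4 / (T ^ (p - 1)) ^ 4 := div_le_div_of_nonneg_right hle (by positivity)
    _ = 4 * (T ^ (1 - p) / 100) ^ 4 := by rw [hinv]; field_simp

/-- Inside `{d < T}` a function whose support has measure `e ^ (-2 β (2 T) ^ p)` vanishes on most of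
each box of size comparable to `T ^ (1 - p)`, the scale at which the density is nearly constant; the
tail `{T ≤ d}` is controlled by the `U`-bound. -/
lemma exists_lintegral_le_of_muP_support_le (hpq : p.HolderConjugate q) (hβ : 0 < β) :
    ∃ K > 0, ∃ T₀ > 0, ∀ T ≥ T₀, ∀ g : Heis → ℝ, ContDiff ℝ 1 g →
      muP p β (Function.support g) ≤ ENNReal.ofReal (Real.exp (-(2 * β * (2 * T) ^ p))) →
      ∫⁻ x, ‖g x‖ₑ ^ q ∂muP p β ≤ ENNReal.ofReal (K * T ^ (-p)) *
        (∫⁻ x, ‖gradLen g x‖ₑ ^ q ∂muP p β + ∫⁻ x, ‖g x‖ₑ ^ q ∂muP p β) := by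
  obtain ⟨K, hK, htail⟩ := exists_lintegral_tail_le hpq hβ
  obtain ⟨T₀, hT₀⟩ := eventually_atTop.1 ((eventually_mul_exp_neg_le hpq.pos hβ
    (∫ y : Heis, Real.exp (-β * ccNorm y ^ p))).and (eventually_ge_atTop 1))
  set B := 2 * Real.exp (β * (p * 2 ^ (p - 1)))
  refine ⟨B + K, by positivity, T₀, by linarith [(hT₀ T₀ le_rfl).2], fun T hT g hg hsupp => ?_⟩
  obtain ⟨hTvol, hT1⟩ := hT₀ T hT
  set G := ∫⁻ x, ‖gradLen g x‖ₑ ^ q ∂muP p β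
  set F := ∫⁻ x, ‖g x‖ₑ ^ q ∂muP p β
  have hvol := volume_inter_compl_tail_le hpq.lt.le hβ (by positivity) hTvol
    (measurableSet_support hg.continuous.measurable) hsupp
  calc F = (∫⁻ x in (tail T)ᶜ, ‖g x‖ₑ ^ q ∂muP p β) + ∫⁻ x in tail T, ‖g x‖ₑ ^ q ∂muP p β := by
        rw [add_comm, lintegral_add_compl _ (measurableSet_tail T)]
    _ ≤ ENNReal.ofReal (B * T ^ (-p)) * (G + F) + ENNReal.ofReal (K * T ^ (-p)) * (G + F) := by
        refine add_le_add ((lintegral_compl_tail_le_of_volume_support_le hpq hβ hT1 hg hvol).trans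
          ?_) (htail T (by positivity) g hg)
        gcongr
        exact le_self_add
    _ = ENNReal.ofReal ((B + K) * T ^ (-p)) * (G + F) := by
        rw [← add_mul, ← ENNReal.ofReal_add (by positivity) (by positivity), add_mul]

lemma exists_faberKrahn_muP (hpq : p.HolderConjugate q) (hβ : 0 < β) :
    ∃ C, FaberKrahn (muP p β) q C := by
  obtain ⟨K, hK, T₀, hT₀, hlarge⟩ := exists_lintegral_le_of_muP_support_le hpq hβ
  refine ⟨(2 * β * (2 * T₀) ^ p + 2 * β * 2 ^ p * K).toNNReal, fun L g hg hsupp => ?_⟩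
  rcases le_total L (2 * β * (2 * T₀) ^ p) with hL | hL
  · refine mul_le_mul' (ENNReal.ofReal_le_ofReal (hL.trans ?_)) le_add_self
    exact le_add_of_nonneg_right (by positivity)
  obtain ⟨T, hT, rfl⟩ : ∃ T ≥ T₀, 2 * β * (2 * T) ^ p = L := by
    have hL' : (2 * T₀) ^ p ≤ L / (2 * β) := by
      rwa [le_div_iff₀ (by positivity), mul_comm]
    have hLnonneg : 0 ≤ L / (2 * β) := hL'.trans' (by positivity)
    refine ⟨(L / (2 * β)) ^ p⁻¹ / 2, ?_, ?_⟩
    · linarith [(Real.le_rpow_inv_iff_of_pos (by positivity) hLnonneg hpq.pos).2 hL']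
    · rw [mul_div_cancel₀ _ two_ne_zero, Real.rpow_inv_rpow hLnonneg hpq.ne_zero]
      field_simp
  have hT0 : 0 < T := hT₀.trans_le hT
  have hTp : T ^ p * T ^ (-p) = 1 := by rw [← Real.rpow_add hT0]; simp
  refine (mul_le_mul_right (hlarge T hT g hg hsupp) _).trans ?_
  rw [← mul_assoc, ← ENNReal.ofReal_mul (by positivity), Real.mul_rpow zero_le_two hT0.le]
  refine mul_le_mul_left (ENNReal.ofReal_le_ofReal (le_add_of_nonneg_of_le (by positivity) ?_)) _
  exact (by linear_combination 2 * β * 2 ^ p * K * hTp : _ = _).le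

end MuP

/-! ### Slicing -/

/-- A smooth even cutoff vanishing on `[-1, 1]` and equal to `1` outside `(-2, 2)`. -/
def cutoff (u : ℝ) : ℝ := Real.smoothTransition (u ^ 2 - 1)

lemma contDiff_cutoff : ContDiff ℝ 1 cutoff :=
  Real.smoothTransition.contDiff.comp (by fun_prop)

lemma cutoff_eq_zero {u : ℝ} (hu : |u| ≤ 1) : cutoff u = 0 :=
  Real.smoothTransition.zero_of_nonpos (by linarith [(sq_le_one_iff_abs_le_one u).2 hu])

lemma cutoff_eq_one {u : ℝ} (hu : 2 ≤ |u|) : cutoff u = 1 :=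
  Real.smoothTransition.one_of_one_le (by nlinarith [sq_abs u])

lemma deriv_cutoff_eq_zero {u : ℝ} (hu : |u| ∉ Set.Ico 1 2) : deriv cutoff u = 0 := by
  rcases lt_or_ge |u| 1 with h | h
  · refine IsLocalMin.deriv_eq_zero (.of_forall fun v => ?_)
    rw [cutoff_eq_zero h.le]
    exact Real.smoothTransition.nonneg _
  · refine IsLocalMax.deriv_eq_zero (.of_forall fun v => ?_)
    rw [cutoff_eq_one (not_lt.1 fun h' => hu ⟨h, h'⟩)]
    exact Real.smoothTransition.le_one _

lemma exists_enorm_deriv_cutoff_le : ∃ B : ℝ≥0, ∀ u, ‖deriv cutoff u‖ₑ ≤ B := by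
  have hsupp : HasCompactSupport (deriv cutoff) :=
    .intro (isCompact_Icc (a := (-2 : ℝ)) (b := 2)) fun u hu =>
      deriv_cutoff_eq_zero fun h => hu (abs_le.1 h.2.le)
  obtain ⟨B, hB⟩ := hsupp.exists_bound_of_continuous
    (contDiff_cutoff.continuous_deriv le_rfl)
  exact ⟨B.toNNReal, fun u => Real.enorm_eq_ofReal_abs _ ▸ ENNReal.ofReal_le_ofReal (hB u)⟩

/-- The slice of height `s`: it captures the part of the graph of `u` between the levels `s` and
`2 * s`. -/
def slice (s u : ℝ) : ℝ := s * cutoff (u / s)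

section Slice

variable {s u : ℝ}

lemma contDiff_slice (s : ℝ) : ContDiff ℝ 1 (slice s) :=
  contDiff_const.mul (contDiff_cutoff.comp (contDiff_id.div_const s))

@[fun_prop]
lemma measurable_slice (s : ℝ) : Measurable (slice s) :=
  (contDiff_slice s).continuous.measurable

lemma hasDerivAt_slice (hs : s ≠ 0) (u : ℝ) :
    HasDerivAt (slice s) (deriv cutoff (u / s)) u := by
  have hcut : HasDerivAt (fun v => cutoff (v / s)) (deriv cutoff (u / s) * (1 / s)) u :=
    (contDiff_cutoff.differentiable one_ne_zero _).hasDerivAt.comp u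
      ((hasDerivAt_id u).div_const s)
  exact (hcut.const_mul s).congr_deriv (by field_simp)

lemma slice_eq_zero (hs : 0 < s) (hu : |u| ≤ s) : slice s u = 0 := by
  rw [slice, cutoff_eq_zero, mul_zero]
  rwa [abs_div, abs_of_pos hs, div_le_one hs]

lemma slice_eq_self (hs : 0 < s) (hu : 2 * s ≤ |u|) : slice s u = s := by
  rw [slice, cutoff_eq_one, mul_one]
  rwa [abs_div, abs_of_pos hs, le_div_iff₀ hs]

lemma enorm_slice_le (s u : ℝ) : ‖slice s u‖ₑ ≤ ‖s‖ₑ := by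
  rw [slice, enorm_mul]
  refine mul_le_of_le_one_right' ?_
  have hnonneg : 0 ≤ cutoff (u / s) := Real.smoothTransition.nonneg _
  rw [Real.enorm_eq_ofReal_abs, ENNReal.ofReal_le_one, abs_of_nonneg hnonneg]
  exact Real.smoothTransition.le_one _

lemma enorm_gradLen_slice_rpow_le {B : ℝ≥0} (hB : ∀ u, ‖deriv cutoff u‖ₑ ≤ B) {q : ℝ} (hq : 0 < q)
    (hs : 0 < s) {g : Heis → ℝ} (hg : ContDiff ℝ 1 g) (x : Heis) :
    ‖gradLen (fun y => slice s (g y)) x‖ₑ ^ q ≤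
      ({y | |g y| ∈ Set.Ico s (2 * s)}).indicator (fun y => B ^ q * ‖gradLen g y‖ₑ ^ q) x := by
  rw [gradLen_comp (hasDerivAt_slice hs.ne' _) (hg.differentiable one_ne_zero x), enorm_mul,
    enorm_abs, ENNReal.mul_rpow_of_nonneg _ _ hq.le]
  by_cases hx : |g x| ∈ Set.Ico s (2 * s)
  · rw [Set.indicator_of_mem (show x ∈ {y | |g y| ∈ Set.Ico s (2 * s)} from hx)]
    gcongr
    exact hB _
  · rw [deriv_cutoff_eq_zero]
    · simp [hq]
    · rwa [abs_div, abs_of_pos hs, Set.mem_Ico, le_div_iff₀ hs, div_lt_iff₀ hs, one_mul]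

end Slice

section Dyadic

variable {q τ : ℝ}

lemma tsum_le_of_two_mul_le {s b : ℕ → ℝ≥0∞} {C : ℝ≥0∞} (hs : ∀ k, 2 * s k ≤ s (k + 1))
    (hbs : ∀ k, b k ≤ s k) (hb : ∀ k, b k ≠ 0 → s (k + 1) ≤ C) : ∑' k, b k ≤ C := by
  suffices h : ∀ n, ∑ k ∈ Finset.range n, b k ≤ s n ∧ ∑ k ∈ Finset.range n, b k ≤ C from
    ENNReal.tsum_le_of_sum_range_le fun n => (h n).2
  intro n
  induction n with
  | zero => simp
  | succ n ih =>
    have hstep : ∑ k ∈ Finset.range n, b k + b n ≤ s (n + 1) :=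
      (add_le_add ih.1 (hbs n)).trans (by rw [← two_mul]; exact hs n)
    rw [Finset.sum_range_succ]
    refine ⟨hstep, ?_⟩
    by_cases hn : b n = 0
    · rw [hn, add_zero]
      exact ih.2
    · exact hstep.trans (hb n hn)

lemma tsum_enorm_slice_rpow_le (hq : 1 ≤ q) (hτ : 0 < τ) (u : ℝ) :
    ∑' k : ℕ, ‖slice (2 ^ k * τ) u‖ₑ ^ q ≤ 2 ^ q * ‖u‖ₑ ^ q := by
  have hq0 : 0 < q := by positivity
  have henorm : ‖(2 : ℝ)‖ₑ = 2 := by simp [Real.enorm_eq_ofReal_abs]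
  refine tsum_le_of_two_mul_le (s := fun k => ‖2 ^ k * τ‖ₑ ^ q) (fun k => ?_)
    (fun k => by gcongr; exact enorm_slice_le _ _) fun k hk => ?_
  · rw [pow_succ', mul_assoc, enorm_mul 2, henorm, ENNReal.mul_rpow_of_nonneg _ _ hq0.le]
    exact mul_le_mul_left (by simpa using ENNReal.rpow_le_rpow_of_exponent_le one_le_two hq) _
  · have hu : 2 ^ k * τ ≤ |u| := by
      by_contra! hlt
      exact hk (by simp [slice_eq_zero (by positivity) hlt.le, hq0])
    rw [← ENNReal.mul_rpow_of_nonneg _ _ hq0.le]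
    gcongr
    rw [pow_succ', mul_assoc, enorm_mul, henorm]
    gcongr
    rwa [enorm_le_iff_norm_le, Real.norm_eq_abs, abs_of_pos (by positivity)]

lemma tsum_lintegral_gradLen_slice_le {μ : Measure Heis} {B : ℝ≥0}
    (hB : ∀ u, ‖deriv cutoff u‖ₑ ≤ B) (hq : 0 < q) (hτ : 0 < τ) {g : Heis → ℝ}
    (hg : ContDiff ℝ 1 g) :
    ∑' k : ℕ, ∫⁻ x, ‖gradLen (fun y => slice (2 ^ k * τ) (g y)) x‖ₑ ^ q ∂μ ≤
      B ^ q * ∫⁻ x, ‖gradLen g x‖ₑ ^ q ∂μ := by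
  have hgm := hg.continuous.measurable
  have hG := (continuous_gradLen hg).measurable
  have hmono : Monotone fun k : ℕ => 2 ^ k * τ := fun i j hij => by
    dsimp only
    gcongr
    norm_num
  have hmeas (k : ℕ) : MeasurableSet {x | |g x| ∈ Set.Ico (2 ^ k * τ) (2 ^ (k + 1) * τ)} :=
    measurableSet_Ico.preimage (by fun_prop)
  calc ∑' k : ℕ, ∫⁻ x, ‖gradLen (fun y => slice (2 ^ k * τ) (g y)) x‖ₑ ^ q ∂μ
      ≤ ∑' k : ℕ, ∫⁻ x in {x | |g x| ∈ Set.Ico (2 ^ k * τ) (2 ^ (k + 1) * τ)},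
          B ^ q * ‖gradLen g x‖ₑ ^ q ∂μ := by
        refine ENNReal.tsum_le_tsum fun k => ?_
        rw [← lintegral_indicator (hmeas k), pow_succ', mul_assoc]
        exact lintegral_mono (enorm_gradLen_slice_rpow_le hB hq (by positivity) hg)
    _ = ∫⁻ x in ⋃ k : ℕ, {x | |g x| ∈ Set.Ico (2 ^ k * τ) (2 ^ (k + 1) * τ)},
          B ^ q * ‖gradLen g x‖ₑ ^ q ∂μ :=
        (lintegral_iUnion hmeas (fun i j hij =>
          (hmono.pairwise_disjoint_on_Ico_succ hij).preimage fun x => |g x|) _).symm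
    _ ≤ B ^ q * ∫⁻ x, ‖gradLen g x‖ₑ ^ q ∂μ := by
        rw [← lintegral_const_mul _ (by fun_prop)]
        exact setLIntegral_le_lintegral _ _

lemma exists_enorm_le_four_mul_enorm_slice (hτ : 0 < τ) {u : ℝ} (hu : 2 * τ ≤ |u|) :
    ∃ k : ℕ, ‖u‖ₑ ≤ 4 * ‖slice (2 ^ k * τ) u‖ₑ ∧ Real.log (|u| / τ) ≤ k * Real.log 2 + 2 := by
  obtain ⟨k, hk, hk'⟩ := exists_nat_pow_near (x := |u| / (2 * τ))
    (by rwa [le_div_iff₀ (by positivity), one_mul]) one_lt_two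
  rw [le_div_iff₀ (by positivity)] at hk
  rw [div_lt_iff₀ (by positivity)] at hk'
  have hu0 : 0 < |u| := by linarith
  have hle : |u| ≤ 2 ^ (k + 2) * τ := by
    rw [pow_succ _ (k + 1), mul_assoc]
    exact hk'.le
  refine ⟨k, ?_, ?_⟩
  · have h4 : ‖(4 : ℝ)‖ₑ = 4 := by simp [Real.enorm_eq_ofReal_abs]
    rw [slice_eq_self (by positivity) (by linarith), ← h4, ← enorm_mul, enorm_le_iff_norm_le,
      Real.norm_eq_abs, Real.norm_eq_abs, abs_of_pos (a := 4 * _) (by positivity)]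
    exact hle.trans_eq (by ring)
  · have hlog : Real.log (|u| / τ) ≤ Real.log (2 ^ (k + 2)) :=
      Real.log_le_log (by positivity) ((div_le_iff₀ hτ).2 hle)
    rw [Real.log_pow] at hlog
    push_cast at hlog
    linarith [Real.log_two_lt_d9]

lemma enorm_rpow_mul_log_le (hq : 1 ≤ q) (hτ : 0 < τ) (u : ℝ) :
    ‖u‖ₑ ^ q * ENNReal.ofReal (Real.log (|u| / τ)) ≤
      4 ^ q * (∑' k : ℕ, ENNReal.ofReal (q * (k * Real.log 2)) * ‖slice (2 ^ k * τ) u‖ₑ ^ q) +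
        2 * ‖u‖ₑ ^ q := by
  rcases lt_or_ge |u| (2 * τ) with hu | hu
  · have hlog : Real.log (|u| / τ) ≤ 2 :=
      (Real.log_le_self (by positivity)).trans ((div_le_iff₀ hτ).2 hu.le)
    rw [mul_comm 2]
    exact le_add_left (mul_le_mul_right (by simpa using ENNReal.ofReal_le_ofReal hlog) _)
  obtain ⟨k, hle, hlog⟩ := exists_enorm_le_four_mul_enorm_slice hτ hu
  calc ‖u‖ₑ ^ q * ENNReal.ofReal (Real.log (|u| / τ))
      ≤ ‖u‖ₑ ^ q * (ENNReal.ofReal (q * (k * Real.log 2)) + 2) := by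
        have : Real.log (|u| / τ) ≤ q * (k * Real.log 2) + 2 :=
          hlog.trans (add_le_add_left (le_mul_of_one_le_left (by positivity) hq) _)
        gcongr
        simpa using (ENNReal.ofReal_le_ofReal this).trans ENNReal.ofReal_add_le
    _ ≤ 4 ^ q * (ENNReal.ofReal (q * (k * Real.log 2)) * ‖slice (2 ^ k * τ) u‖ₑ ^ q) +
          2 * ‖u‖ₑ ^ q := by
        rw [mul_add, mul_comm _ 2, mul_left_comm (4 ^ q),
          ← ENNReal.mul_rpow_of_nonneg _ _ (by positivity), mul_comm (‖u‖ₑ ^ q)]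
        gcongr
    _ ≤ _ := by
        gcongr
        exact ENNReal.le_tsum (f := fun k : ℕ =>
          ENNReal.ofReal (q * (k * Real.log 2)) * ‖slice (2 ^ k * τ) u‖ₑ ^ q) k

lemma measure_support_slice_le {μ : Measure Heis} (hq : 0 < q) (hτ : 0 < τ) {g : Heis → ℝ}
    (hg : Measurable g) (hτg : ∫⁻ x, ‖g x‖ₑ ^ q ∂μ ≤ ENNReal.ofReal τ ^ q) (k : ℕ) :
    μ (Function.support fun x => slice (2 ^ k * τ) (g x)) ≤
      ENNReal.ofReal (Real.exp (-(q * (k * Real.log 2)))) := by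
  have hpow : ENNReal.ofReal (Real.exp (q * (k * Real.log 2))) = ENNReal.ofReal (2 ^ k) ^ q := by
    rw [ENNReal.ofReal_rpow_of_pos (by positivity), mul_comm q, Real.exp_mul, ← Real.log_pow,
      Real.exp_log (by positivity)]
  have hsub : (Function.support fun x => slice (2 ^ k * τ) (g x)) ⊆
      {x | ENNReal.ofReal (2 ^ k * τ) ^ q ≤ ‖g x‖ₑ ^ q} := fun x hx => by
    have hlt : 2 ^ k * τ < |g x| := by
      by_contra! hle
      exact hx (slice_eq_zero (by positivity) hle)
    refine ENNReal.rpow_le_rpow ?_ hq.le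
    rw [Real.enorm_eq_ofReal_abs]
    exact ENNReal.ofReal_le_ofReal hlt.le
  have hmarkov : ENNReal.ofReal τ ^ q *
      (ENNReal.ofReal (2 ^ k) ^ q * μ (Function.support fun x => slice (2 ^ k * τ) (g x))) ≤
        ENNReal.ofReal τ ^ q * 1 := by
    rw [← mul_assoc, ← ENNReal.mul_rpow_of_nonneg _ _ hq.le, ← ENNReal.ofReal_mul hτ.le, mul_one,
      mul_comm τ]
    exact ((mul_le_mul_right (measure_mono hsub) _).trans
      (mul_meas_ge_le_lintegral (by fun_prop) _)).trans hτg
  have hτ0 : ENNReal.ofReal τ ^ q ≠ 0 := by simp [hτ]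
  have hτtop : ENNReal.ofReal τ ^ q ≠ ∞ := by finiteness
  rw [ENNReal.mul_le_mul_iff_right hτ0 hτtop, ← hpow] at hmarkov
  rw [Real.exp_neg, ENNReal.ofReal_inv_of_pos (Real.exp_pos _)]
  exact ENNReal.le_inv_iff_mul_le.2 (by rwa [mul_comm])

lemma FaberKrahn.exists_lintegral_mul_log_le {μ : Measure Heis} {C : ℝ≥0}
    (hμ : FaberKrahn μ q C) (hq : 1 ≤ q) :
    ∃ C' : ℝ≥0, ∀ g : Heis → ℝ, ContDiff ℝ 1 g → ∀ τ : ℝ, 0 < τ →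
      ∫⁻ x, ‖g x‖ₑ ^ q ∂μ ≤ ENNReal.ofReal τ ^ q →
      ∫⁻ x, ‖g x‖ₑ ^ q * ENNReal.ofReal (Real.log (|g x| / τ)) ∂μ ≤
        C' * (∫⁻ x, ‖gradLen g x‖ₑ ^ q ∂μ + ∫⁻ x, ‖g x‖ₑ ^ q ∂μ) := by
  obtain ⟨B, hB⟩ := exists_enorm_deriv_cutoff_le
  have hq0 : 0 < q := by positivity
  refine ⟨4 ^ q * (C * (B ^ q + 2 ^ q)) + 2, fun g hg τ hτ hτg => ?_⟩
  have hgm := hg.continuous.measurable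
  set G := ∫⁻ x, ‖gradLen g x‖ₑ ^ q ∂μ
  set N := ∫⁻ x, ‖g x‖ₑ ^ q ∂μ
  have hslice : ∑' k : ℕ, ∫⁻ x, ‖slice (2 ^ k * τ) (g x)‖ₑ ^ q ∂μ ≤ 2 ^ q * N := by
    rw [← lintegral_tsum fun k => by fun_prop, ← lintegral_const_mul _ (by fun_prop)]
    exact lintegral_mono fun x => tsum_enorm_slice_rpow_le hq hτ (g x)
  have hsum : ∑' k : ℕ, ∫⁻ x,
      ENNReal.ofReal (q * (k * Real.log 2)) * ‖slice (2 ^ k * τ) (g x)‖ₑ ^ q ∂μ ≤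
        C * (B ^ q * G + 2 ^ q * N) := by
    refine le_trans (ENNReal.tsum_le_tsum fun k => ?_) (ENNReal.tsum_mul_left.trans_le
      (mul_le_mul_right (ENNReal.tsum_add.trans_le
        (add_le_add (tsum_lintegral_gradLen_slice_le hB hq0 hτ hg) hslice)) _))
    rw [lintegral_const_mul _ (by fun_prop)]
    exact hμ _ _ ((contDiff_slice _).comp hg) (measure_support_slice_le hq0 hτ hgm hτg k)
  calc ∫⁻ x, ‖g x‖ₑ ^ q * ENNReal.ofReal (Real.log (|g x| / τ)) ∂μ
      ≤ ∫⁻ x, 4 ^ q * (∑' k : ℕ, ENNReal.ofReal (q * (k * Real.log 2)) *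
          ‖slice (2 ^ k * τ) (g x)‖ₑ ^ q) + 2 * ‖g x‖ₑ ^ q ∂μ :=
        lintegral_mono fun x => enorm_rpow_mul_log_le hq hτ (g x)
    _ ≤ 4 ^ q * (C * (B ^ q * G + 2 ^ q * N)) + 2 * N := by
        rw [lintegral_add_right _ (by fun_prop), lintegral_const_mul _ (by fun_prop),
          lintegral_const_mul _ (by fun_prop), lintegral_tsum fun k => by fun_prop]
        gcongr
    _ ≤ 4 ^ q * (C * ((B ^ q + 2 ^ q) * (G + N))) + 2 * (G + N) := by
        rw [add_mul]
        gcongr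
        all_goals first | exact le_self_add | exact le_add_self
    _ = _ := by
        push_cast [ENNReal.coe_rpow_of_nonneg _ hq0.le]
        ring

end Dyadic

/-! ### From the sliced bound to entropy -/

open InformationTheory

lemma klFun_le_sq_sub_one {s : ℝ} (hs : 0 ≤ s) : klFun s ≤ (s - 1) ^ 2 := by
  have hlog : s * Real.log s ≤ s * (s - 1) := by
    rcases hs.eq_or_lt with rfl | hs
    · simp
    · exact mul_le_mul_of_nonneg_left (Real.log_le_sub_one_of_pos hs) hs.le
  rw [klFun]
  linarith

section Pointwise

variable {q v w x : ℝ}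

lemma abs_rpow_sub_one_le (hq : 0 ≤ q) (hq2 : q ≤ 2) (hv : 0 ≤ v) :
    |v ^ q - 1| ≤ |v ^ 2 - 1| := by
  rw [← Real.rpow_two]
  rcases le_total v 1 with hv1 | hv1
  · have hq1 := Real.rpow_le_one hv hv1 hq
    have h21 := Real.rpow_le_one hv hv1 zero_le_two
    have hle := Real.rpow_le_rpow_of_exponent_ge_of_imp hv hv1 hq2
      fun _ h => absurd h two_ne_zero
    rw [abs_of_nonpos (by linarith), abs_of_nonpos (by linarith)]
    linarith
  · have hq1 := Real.one_le_rpow hv1 hq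
    have hle := Real.rpow_le_rpow_of_exponent_le hv1 hq2
    rw [abs_of_nonneg (by linarith), abs_of_nonneg (by linarith)]
    linarith

lemma klFun_rpow_le_of_le_two (hq : 0 < q) (hq2 : q ≤ 2) (hv : 0 ≤ v) (hv2 : v ≤ 2) :
    klFun (v ^ q) ≤ 9 * |v - 1| ^ q := by
  have hsq : |v ^ 2 - 1| ≤ 3 * |v - 1| := by
    rw [show v ^ 2 - 1 = (v + 1) * (v - 1) by ring, abs_mul, abs_of_nonneg (by linarith)]
    gcongr
    linarith
  have hle1 : |v - 1| ≤ 1 := abs_le.2 ⟨by linarith, by linarith⟩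
  calc klFun (v ^ q) ≤ |v ^ q - 1| ^ 2 := by
        rw [sq_abs]
        exact klFun_le_sq_sub_one (by positivity)
    _ ≤ (3 * |v - 1|) ^ 2 := by
        gcongr
        exact (abs_rpow_sub_one_le hq.le hq2 hv).trans hsq
    _ = 9 * |v - 1| ^ (2 : ℝ) := by rw [Real.rpow_two]; ring
    _ ≤ 9 * |v - 1| ^ q := by
        gcongr 9 * ?_
        exact Real.rpow_le_rpow_of_exponent_ge_of_imp (abs_nonneg _) hle1 hq2
          fun _ h => absurd h two_ne_zero

lemma klFun_rpow_le_of_two_le (hq : 0 ≤ q) (hq2 : q ≤ 2) (hv : 2 ≤ v) (hvx : v ≤ 1 + x) :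
    klFun (v ^ q) ≤ 8 * (x ^ q * (1 + Real.log x)) := by
  have hv0 : 0 < v := by linarith
  have hx : 1 ≤ x := by linarith
  have : 0 ≤ Real.log x := Real.log_nonneg hx
  have hlogv : Real.log v ≤ 1 + Real.log x := by
    have := Real.log_le_log hv0 (show v ≤ 2 * x by linarith)
    rw [Real.log_mul two_ne_zero (by positivity)] at this
    linarith [Real.log_two_lt_d9]
  have hpow : v ^ q ≤ 4 * x ^ q := calc
    v ^ q ≤ (2 * x) ^ q := by gcongr; linarith
    _ ≤ 2 ^ (2 : ℝ) * x ^ q := by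
      rw [Real.mul_rpow zero_le_two (by positivity)]
      gcongr
      exact one_le_two
    _ = 4 * x ^ q := by norm_num
  have hone : 1 ≤ v ^ q := Real.one_le_rpow (by linarith) hq
  calc klFun (v ^ q) ≤ v ^ q * (q * Real.log v) := by
        rw [klFun, Real.log_rpow hv0]
        linarith
    _ ≤ 4 * x ^ q * (2 * (1 + Real.log x)) := by
        have hlogv0 : 0 ≤ Real.log v := Real.log_nonneg (by linarith)
        gcongr
    _ = _ := by ring

lemma ofReal_klFun_rpow_le (hq : 0 < q) (hq2 : q ≤ 2) (hv : 0 ≤ v) (hvw : |v - 1| ≤ w)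
    (hvx : v ≤ 1 + x) :
    ENNReal.ofReal (klFun (v ^ q)) ≤ 9 * ENNReal.ofReal w ^ q +
      8 * (ENNReal.ofReal x ^ q * (1 + ENNReal.ofReal (Real.log x))) := by
  rcases le_total v 2 with hv2 | hv2
  · refine le_add_right ?_
    have hw := (abs_nonneg _).trans hvw
    rw [ENNReal.ofReal_rpow_of_nonneg hw hq.le, ← ENNReal.ofReal_ofNat,
      ← ENNReal.ofReal_mul (by norm_num)]
    refine ENNReal.ofReal_le_ofReal ((klFun_rpow_le_of_le_two hq hq2 hv hv2).trans ?_)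
    gcongr
  · refine le_add_left ?_
    have hx : 1 ≤ x := by linarith
    rw [ENNReal.ofReal_rpow_of_nonneg (by positivity) hq.le, ← ENNReal.ofReal_one,
      ← ENNReal.ofReal_add zero_le_one (Real.log_nonneg hx), ← ENNReal.ofReal_ofNat,
      ← ENNReal.ofReal_mul (by positivity), ← ENNReal.ofReal_mul (by norm_num)]
    exact ENNReal.ofReal_le_ofReal (klFun_rpow_le_of_two_le hq.le hq2 hv2 hvx)

lemma ofReal_rpow_mul_klFun_le (hq : 1 ≤ q) (hq2 : q ≤ 2) {a ν : ℝ} (hν : 0 ≤ ν)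
    (hτ : 0 < |a| + ν) (u : ℝ) :
    ENNReal.ofReal ((|a| + ν) ^ q) * ENNReal.ofReal (klFun (|u| ^ q / (|a| + ν) ^ q)) ≤
      26 * ‖u - a‖ₑ ^ q + 18 * ENNReal.ofReal ν ^ q +
        8 * (‖u - a‖ₑ ^ q * ENNReal.ofReal (Real.log (|u - a| / (|a| + ν)))) := by
  have hq0 : 0 < q := by positivity
  set τ := |a| + ν
  have hscale (y : ℝ) : ENNReal.ofReal (τ ^ q) * ENNReal.ofReal (y / τ) ^ q =
      ENNReal.ofReal y ^ q := by
    rw [← ENNReal.ofReal_rpow_of_pos hτ, ← ENNReal.mul_rpow_of_nonneg _ _ hq0.le,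
      ← ENNReal.ofReal_mul hτ.le, mul_div_cancel₀ _ hτ.ne']
  have htri : |u| ≤ |a| + |u - a| := by simpa using abs_add_le a (u - a)
  have htri' : |a| ≤ |u| + |u - a| := by simpa using abs_sub u (u - a)
  have hvw : |(|u| / τ) - 1| ≤ (|u - a| + ν) / τ := by
    rw [div_sub_one hτ.ne', abs_div, abs_of_pos hτ]
    gcongr
    exact abs_le.2 ⟨by linarith, by linarith⟩
  have hvx : |u| / τ ≤ 1 + |u - a| / τ := by
    rw [one_add_div hτ.ne']
    gcongr
    linarith
  have hadd : ENNReal.ofReal (|u - a| + ν) ^ q ≤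
      2 * (‖u - a‖ₑ ^ q + ENNReal.ofReal ν ^ q) := by
    rw [ENNReal.ofReal_add (abs_nonneg _) hν, ← Real.enorm_eq_ofReal_abs]
    refine (ENNReal.rpow_add_le_mul_rpow_add_rpow _ _ hq).trans (mul_le_mul_left ?_ _)
    simpa using ENNReal.rpow_le_rpow_of_exponent_le one_le_two (show q - 1 ≤ 1 by linarith)
  rw [← Real.div_rpow (abs_nonneg _) hτ.le]
  refine (mul_le_mul_right (ofReal_klFun_rpow_le hq0 hq2 (by positivity) hvw hvx) _).trans ?_
  rw [mul_add, mul_left_comm, hscale, mul_left_comm _ 8, ← mul_assoc _ (_ ^ q), hscale,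
    ← Real.enorm_eq_ofReal_abs]
  refine (add_le_add_left (mul_le_mul_right hadd 9) _).trans_eq ?_
  ring

end Pointwise

lemma lintegral_klFun_le {α : Type*} {m : MeasurableSpace α} {μ : Measure α}
    [IsProbabilityMeasure μ] {q : ℝ} (hq : 1 ≤ q) (hq2 : q ≤ 2) {f : α → ℝ} (hf : Measurable f)
    {a ν : ℝ} (hν : 0 ≤ ν) (hτ : 0 < |a| + ν) :
    ENNReal.ofReal ((|a| + ν) ^ q) *
        ∫⁻ x, ENNReal.ofReal (klFun (|f x| ^ q / (|a| + ν) ^ q)) ∂μ ≤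
      26 * ∫⁻ x, ‖f x - a‖ₑ ^ q ∂μ + 18 * ENNReal.ofReal ν ^ q +
        8 * ∫⁻ x, ‖f x - a‖ₑ ^ q * ENNReal.ofReal (Real.log (|f x - a| / (|a| + ν))) ∂μ := by
  rw [← lintegral_const_mul' _ _ ENNReal.ofReal_ne_top]
  refine (lintegral_mono fun x => ofReal_rpow_mul_klFun_le hq hq2 hν hτ (f x)).trans_eq ?_
  rw [lintegral_add_left (by fun_prop), lintegral_add_left (by fun_prop),
    lintegral_const_mul _ (by fun_prop), lintegral_const_mul _ (by fun_prop),
    lintegral_const_mul _ (by fun_prop), lintegral_const, measure_univ, mul_one]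

lemma integral_mul_log_div_integral_le {α : Type*} {m : MeasurableSpace α} {μ : Measure α}
    [IsProbabilityMeasure μ] {F : α → ℝ} (hF : Integrable F μ) (hF0 : 0 < ∫ x, F x ∂μ) {t : ℝ}
    (ht : 0 < t) (hkl : Integrable (fun x => klFun (F x / t)) μ) :
    Integrable (fun x => F x * Real.log (F x / ∫ y, F y ∂μ)) μ ∧
      ∫ x, F x * Real.log (F x / ∫ y, F y ∂μ) ∂μ ≤ t * ∫ x, klFun (F x / t) ∂μ := by
  set I := ∫ x, F x ∂μ
  have hpt (x : α) : F x * Real.log (F x / I) =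
      t * klFun (F x / t) + (F x - t) + F x * Real.log (t / I) := by
    rw [klFun]
    rcases eq_or_ne (F x) 0 with h | h
    · simp [h]
    · rw [Real.log_div h hF0.ne', Real.log_div h ht.ne', Real.log_div ht.ne' hF0.ne']
      field_simp
      ring
  have hFt : Integrable (fun x => F x - t) μ := hF.sub (integrable_const t)
  have hint : Integrable (fun x => t * klFun (F x / t) + (F x - t)) μ :=
    (hkl.const_mul t).add hFt
  simp only [hpt]
  refine ⟨hint.add (hF.mul_const _), ?_⟩
  have hlog : I * Real.log (t / I) ≤ t - I := by
    have := mul_le_mul_of_nonneg_left (Real.log_le_sub_one_of_pos (div_pos ht hF0)) hF0.le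
    rwa [mul_sub, mul_one, mul_div_cancel₀ _ hF0.ne'] at this
  rw [integral_add hint (hF.mul_const _), integral_add (hkl.const_mul t) hFt,
    integral_sub hF (integrable_const t), integral_const_mul, integral_mul_const]
  simp
  linarith

lemma integrable_abs_rpow_of_lintegral_sub_const_ne_top {α : Type*} {m : MeasurableSpace α}
    {μ : Measure α} [IsFiniteMeasure μ] {q : ℝ} (hq : 0 < q) {f : α → ℝ} (hf : Measurable f)
    {a : ℝ} (hfa : ∫⁻ x, ‖f x - a‖ₑ ^ q ∂μ ≠ ∞) : Integrable (fun x => |f x| ^ q) μ := by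
  have hq0 : ENNReal.ofReal q ≠ 0 := by simpa using hq
  have hsub : MemLp (fun x => f x - a) (ENNReal.ofReal q) μ := by
    refine ⟨by fun_prop, (eLpNorm_lt_top_iff_lintegral_rpow_enorm_lt_top hq0 (by simp)).2 ?_⟩
    rw [ENNReal.toReal_ofReal hq.le]
    exact hfa.lt_top
  have hmem : MemLp f (ENNReal.ofReal q) μ := by
    simpa only [Pi.add_def, sub_add_cancel] using hsub.add (memLp_const a)
  simpa [ENNReal.toReal_ofReal hq.le] using hmem.integrable_norm_rpow'

lemma integral_mul_log_div_integral_le_of_lintegral_klFun_le {α : Type*} {m : MeasurableSpace α}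
    {μ : Measure α} [IsProbabilityMeasure μ] {F : α → ℝ} (hF : Integrable F μ) (hF0 : 0 ≤ F)
    (hpos : 0 < ∫ x, F x ∂μ) {t R : ℝ} (ht : 0 < t) (hR : 0 ≤ R)
    (hkl : ENNReal.ofReal t * ∫⁻ x, ENNReal.ofReal (klFun (F x / t)) ∂μ ≤ ENNReal.ofReal R) :
    Integrable (fun x => F x * Real.log (F x / ∫ y, F y ∂μ)) μ ∧
      ∫ x, F x * Real.log (F x / ∫ y, F y ∂μ) ∂μ ≤ R := by
  have hkl0 : 0 ≤ fun x => klFun (F x / t) := fun x => klFun_nonneg (div_nonneg (hF0 x) ht.le)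
  have hmeas : AEStronglyMeasurable (fun x => klFun (F x / t)) μ :=
    (measurable_klFun.comp_aemeasurable (hF.aemeasurable.div_const t)).aestronglyMeasurable
  have hfin : ∫⁻ x, ENNReal.ofReal (klFun (F x / t)) ∂μ ≠ ∞ := fun htop => by
    rw [htop, ENNReal.mul_top (by simpa using ht)] at hkl
    exact ENNReal.ofReal_ne_top (top_le_iff.1 hkl)
  have hint := (lintegral_ofReal_ne_top_iff_integrable hmeas (.of_forall hkl0)).1 hfin
  rw [← ofReal_integral_eq_lintegral_ofReal hint (.of_forall hkl0), ← ENNReal.ofReal_mul ht.le,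
    ENNReal.ofReal_le_ofReal_iff hR] at hkl
  have hent := integral_mul_log_div_integral_le hF hpos ht hint
  exact ⟨hent.1, hent.2.trans hkl⟩

lemma ofReal_integral_rpow {α : Type*} {m : MeasurableSpace α} {μ : Measure α} {q : ℝ}
    (hq : 0 ≤ q) {F : α → ℝ} (hF0 : 0 ≤ F) (hF : Integrable (fun x => F x ^ q) μ) :
    ENNReal.ofReal (∫ x, F x ^ q ∂μ) = ∫⁻ x, ‖F x‖ₑ ^ q ∂μ := by
  rw [ofReal_integral_eq_lintegral_ofReal hF
    (.of_forall fun x => Real.rpow_nonneg (hF0 x) q)]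
  simp_rw [Real.enorm_of_nonneg (hF0 _), ENNReal.ofReal_rpow_of_nonneg (hF0 _) hq]

lemma FaberKrahn.exists_lintegral_klFun_le {μ : Measure Heis} [IsProbabilityMeasure μ] {q : ℝ}
    {C : ℝ≥0} (hμ : FaberKrahn μ q C) (hq : 1 ≤ q) (hq2 : q ≤ 2) :
    ∃ K : ℝ≥0, ∀ f : Heis → ℝ, ContDiff ℝ 1 f → ∫⁻ x, ‖f x‖ₑ ^ q ∂μ ≠ 0 →
      ∀ a : ℝ, ∫⁻ x, ‖f x - a‖ₑ ^ q ∂μ ≠ ∞ → ∃ t : ℝ, 0 < t ∧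
        ENNReal.ofReal t * ∫⁻ x, ENNReal.ofReal (klFun (|f x| ^ q / t)) ∂μ ≤
          K * (∫⁻ x, ‖gradLen f x‖ₑ ^ q ∂μ + ∫⁻ x, ‖f x - a‖ₑ ^ q ∂μ) := by
  obtain ⟨C', hC'⟩ := hμ.exists_lintegral_mul_log_le hq
  have hq0 : 0 < q := by positivity
  refine ⟨44 + 8 * C', fun f hf hf0 a ha => ?_⟩
  set G := ∫⁻ x, ‖gradLen f x‖ₑ ^ q ∂μ
  set N := ∫⁻ x, ‖f x - a‖ₑ ^ q ∂μ with hN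
  set ν := (N ^ q⁻¹).toReal
  have hνN : ENNReal.ofReal ν ^ q = N := by
    rw [ENNReal.ofReal_toReal (by finiteness), ENNReal.rpow_inv_rpow hq0.ne']
  have hν : 0 ≤ ν := ENNReal.toReal_nonneg
  have hτ : 0 < |a| + ν := by
    by_contra! hle
    have ha0 : a = 0 := abs_eq_zero.1 (by linarith [abs_nonneg a])
    have hν0 : ν = 0 := by linarith [abs_nonneg a]
    exact hf0 (by simpa [hν0, ha0, hN, hq0] using hνN.symm)
  have hlog : ∫⁻ x, ‖f x - a‖ₑ ^ q * ENNReal.ofReal (Real.log (|f x - a| / (|a| + ν))) ∂μ ≤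
      C' * (G + N) := by
    have hle : N ≤ ENNReal.ofReal (|a| + ν) ^ q := by
      rw [← hνN]
      gcongr
      exact le_add_of_nonneg_left (abs_nonneg a)
    simpa only [gradLen_sub_const] using hC' _ (hf.sub contDiff_const) _ hτ hle
  refine ⟨(|a| + ν) ^ q, by positivity, ?_⟩
  calc _ ≤ 26 * N + 18 * ENNReal.ofReal ν ^ q + 8 * (C' * (G + N)) :=
        (lintegral_klFun_le hq hq2 hf.continuous.measurable hν hτ).trans (by gcongr)
    _ ≤ 26 * (G + N) + 18 * (G + N) + 8 * (C' * (G + N)) := by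
        rw [hνN]
        gcongr <;> exact le_add_self
    _ = _ := by push_cast; ring

lemma FaberKrahn.exists_integral_mul_log_le {μ : Measure Heis} [IsProbabilityMeasure μ] {q : ℝ}
    {C : ℝ≥0} (hμ : FaberKrahn μ q C) (hq : 1 ≤ q) (hq2 : q ≤ 2) :
    ∃ K : ℝ≥0, ∀ f : Heis → ℝ, ContDiff ℝ 1 f → ∀ a R : ℝ, 0 ≤ R →
      ∫⁻ x, ‖gradLen f x‖ₑ ^ q ∂μ + ∫⁻ x, ‖f x - a‖ₑ ^ q ∂μ ≤ ENNReal.ofReal R →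
      Integrable (fun x => |f x| ^ q) μ ∧
      Integrable (fun x => |f x| ^ q * Real.log (|f x| ^ q / ∫ y, |f y| ^ q ∂μ)) μ ∧
      ∫ x, |f x| ^ q * Real.log (|f x| ^ q / ∫ y, |f y| ^ q ∂μ) ∂μ ≤ K * R := by
  obtain ⟨K, hK⟩ := hμ.exists_lintegral_klFun_le hq hq2
  have hq0 : 0 < q := by positivity
  refine ⟨K, fun f hf a R hR hfR => ?_⟩
  have hfa : ∫⁻ x, ‖f x - a‖ₑ ^ q ∂μ ≠ ∞ :=
    ne_top_of_le_ne_top ENNReal.ofReal_ne_top (le_add_self.trans hfR)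
  have hfq := integrable_abs_rpow_of_lintegral_sub_const_ne_top hq0 hf.continuous.measurable hfa
  have hnonneg : 0 ≤ ∫ x, |f x| ^ q ∂μ := integral_nonneg fun x => by positivity
  refine ⟨hfq, ?_⟩
  rcases hnonneg.eq_or_lt with hI | hI
  · simp only [← hI, div_zero, Real.log_zero, mul_zero, integral_zero]
    exact ⟨integrable_zero _ _ _, by positivity⟩
  · have hf0 : ∫⁻ x, ‖f x‖ₑ ^ q ∂μ ≠ 0 := by
      have hF := ofReal_integral_rpow hq0.le (fun x => abs_nonneg (f x)) hfq
      simp only [enorm_abs] at hF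
      simpa [← hF] using hI
    obtain ⟨t, ht, hkl⟩ := hK f hf hf0 a hfa
    refine integral_mul_log_div_integral_le_of_lintegral_klFun_le hfq
      (fun x => by positivity) hI ht (by positivity) (hkl.trans ?_)
    rw [ENNReal.ofReal_mul (by positivity), ENNReal.ofReal_coe_nnreal]
    gcongr

theorem heisenberg_LSq_general (p q β : ℝ) (hp : 2 ≤ p) (hβ : 0 < β) (hpq : 1 / p + 1 / q = 1) :
    ∃ c : ℝ, 0 < c ∧ ∀ f : Heis → ℝ, ContDiff ℝ 1 f →
      Integrable (fun x => gradLen f x ^ q) (muP p β) →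
      Integrable (fun x => |f x| ^ q) (muP p β) ∧
      Integrable (fun x => |f x| ^ q * Real.log (|f x| ^ q / ∫ y, |f y| ^ q ∂(muP p β)))
        (muP p β) ∧
      ∫ x, |f x| ^ q * Real.log (|f x| ^ q / ∫ y, |f y| ^ q ∂(muP p β)) ∂(muP p β) ≤
        c * ∫ x, gradLen f x ^ q ∂(muP p β) := by
  have hpq' : p.HolderConjugate q := Real.holderConjugate_iff.2 ⟨by linarith, by simpa using hpq⟩
  have hq2 : q ≤ 2 := by nlinarith [hpq'.mul_eq_add, hpq'.symm.lt]
  have := isProbabilityMeasure_muP hpq'.lt.le hβ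
  obtain ⟨C₁, hpoincare⟩ := exists_poincare_muP hpq' hβ
  obtain ⟨C₂, hfk⟩ := exists_faberKrahn_muP hpq' hβ
  obtain ⟨K, hentropy⟩ := hfk.exists_integral_mul_log_le hpq'.symm.lt.le hq2
  refine ⟨K * (1 + C₁) + 1, by positivity, fun f hf hG => ?_⟩
  obtain ⟨a, ha⟩ := hpoincare f hf
  have hgrad := ofReal_integral_rpow hpq'.symm.nonneg (gradLen_nonneg f) hG
  have hG0 : 0 ≤ ∫ x, gradLen f x ^ q ∂muP p β :=
    integral_nonneg fun x => Real.rpow_nonneg (gradLen_nonneg f x) q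
  obtain ⟨hfq, hint, hle⟩ := hentropy f hf a ((1 + C₁) * ∫ x, gradLen f x ^ q ∂muP p β)
    (by positivity) (by
      rw [ENNReal.ofReal_mul (by positivity), ENNReal.ofReal_add zero_le_one C₁.coe_nonneg,
        ENNReal.ofReal_one, ENNReal.ofReal_coe_nnreal, hgrad, add_mul, one_mul]
      gcongr)
  exact ⟨hfq, hint, by linarith⟩

/-- Hebisch–Zegarliński: for `p ≥ 2`, `β > 0` and `q` dual to `p`, the measure
`μ_p(dx) = e^{-β d^p(x)} dx / Z` satisfies an `(LS_q)` inequality: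
`μ_p(|f|^q log(|f|^q/μ_p|f|^q)) ≤ c μ_p(|∇f|^q)` for all smooth `f`. -/
theorem heisenberg_LSq (p q β : ℝ) (hp : 2 ≤ p) (hβ : 0 < β)
    (hpq : 1 / p + 1 / q = 1) :
    ∃ c : ℝ, 0 < c ∧ ∀ f : Heis → ℝ, ContDiff ℝ (⊤ : ℕ∞) f →
      Integrable (fun x => gradLen f x ^ q) (muP p β) →
      ∫ x, |f x| ^ q * Real.log (|f x| ^ q / ∫ y, |f y| ^ q ∂(muP p β)) ∂(muP p β)
        ≤ c * ∫ x, gradLen f x ^ q ∂(muP p β) := by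
  obtain ⟨c, hc, hLS⟩ := heisenberg_LSq_general p q β hp hβ hpq
  exact ⟨c, hc, fun f hf hG => (hLS f (hf.of_le (by exact_mod_cast le_top)) hG).2.2⟩

end
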